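/- arXiv:1310.7857 — 3 statements merged into one kernel-verified Lean document; each statement's English description precedes it below -/
import Mathlib

section
/- Let (G_n)_{n≥0} be a filtration on a probability space (Ω, F, P) and let (X_n)_{n≥0} be a discrete-parameter d-dimensional process adapted to (G_n)_{n≥0}; write ξ_n := X_n − X_{n−1} for n ≥ 1. Assume that: (i) for every n ≥ 1, almost surely 0 belongs to the relative interior of the convex hull of the support of the regular conditional law of ξ_n given G_{n−1}; (ii) the indicators 1_{{ξ_n = 0}} increase to 1 almost surely as n → ∞; (iii) for every n ≥ 2, P[ξ_n = 0 | G_{n−1}] > 0 almost surely on the event {ξ_{n−1} ≠ 0}. Then there exists a probability measure Q equivalent to P such that X is a Q-martingale and (X_n)_{n≥0} is bounded in L²(Q). -/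
open MeasureTheory Set Filter ProbabilityTheory

noncomputable section

/-- The (topological) support of a measure: the set of points all of whose open
neighbourhoods have positive measure. This is the smallest closed set of full measure. -/
def msupport {E : Type*} [TopologicalSpace E] [MeasurableSpace E] (ν : Measure E) : Set E :=
  {x | ∀ U : Set E, IsOpen U → x ∈ U → 0 < ν U}


namespace EMM

open scoped ENNReal Topology

/-- Exponential weight. -/
def ee {d : ℕ} (l x : Fin d → ℝ) : ℝ := Real.exp (∑ i, (l i * x i - x i ^ 2))

/-- Laplace-type functional. -/
def ph {d : ℕ} (ν : Measure (Fin d → ℝ)) (l : Fin d → ℝ) : ℝ := ∫ x, ee l x ∂ν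

variable {d : ℕ}

lemma ee_pos (l x : Fin d → ℝ) : 0 < ee l x := Real.exp_pos _

lemma ee_le (l x : Fin d → ℝ) : ee l x ≤ Real.exp (∑ i, l i ^ 2 / 4) := by
  unfold ee
  apply Real.exp_le_exp.2
  apply Finset.sum_le_sum
  intro i _
  nlinarith [sq_nonneg (l i / 2 - x i)]

lemma sq_ee_le (l x : Fin d → ℝ) :
    (∑ i, x i ^ 2) * ee l x ≤ 2 * Real.exp (∑ i, l i ^ 2 / 2) := by
  have h1 : (∑ i, x i ^ 2) ≤ 2 * Real.exp ((∑ i, x i ^ 2) / 2) := by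
    have := Real.add_one_le_exp ((∑ i, x i ^ 2) / 2)
    linarith
  have h2 : Real.exp ((∑ i, x i ^ 2) / 2) * ee l x ≤ Real.exp (∑ i, l i ^ 2 / 2) := by
    unfold ee
    rw [← Real.exp_add]
    apply Real.exp_le_exp.2
    rw [Finset.sum_div, ← Finset.sum_add_distrib]
    apply Finset.sum_le_sum
    intro i _
    nlinarith [sq_nonneg (l i - x i)]
  calc _ ≤ 2 * Real.exp ((∑ i, x i ^ 2) / 2) * ee l x :=
        mul_le_mul_of_nonneg_right h1 (ee_pos l x).le
    _ ≤ _ := by nlinarith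

lemma continuous_ee (l : Fin d → ℝ) : Continuous (ee l) := by
  unfold ee; fun_prop

lemma continuous_ee_uncurry :
    Continuous (fun p : (Fin d → ℝ) × (Fin d → ℝ) => ee p.1 p.2) := by
  unfold ee; fun_prop

lemma integrable_ee (ν : Measure (Fin d → ℝ)) [IsProbabilityMeasure ν] (l : Fin d → ℝ) :
    Integrable (ee l) ν := by
  refine Integrable.of_bound (continuous_ee l).aestronglyMeasurable
    (Real.exp (∑ i, l i ^ 2 / 4)) (ae_of_all _ fun x => ?_)
  rw [Real.norm_eq_abs, abs_of_pos (ee_pos l x)]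
  exact ee_le l x

lemma ee_convex (x l l' : Fin d → ℝ) (a b : ℝ) (ha : 0 ≤ a) (hb : 0 ≤ b) (hab : a + b = 1) :
    ee (a • l + b • l') x ≤ a * ee l x + b * ee l' x := by
  unfold ee
  have h := convexOn_exp.2 (mem_univ (∑ i, (l i * x i - x i ^ 2)))
    (mem_univ (∑ i, (l' i * x i - x i ^ 2))) ha hb hab
  simp only [smul_eq_mul] at h
  refine le_trans (le_of_eq ?_) h
  congr 1
  rw [Finset.mul_sum, Finset.mul_sum, ← Finset.sum_add_distrib]
  apply Finset.sum_congr rfl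
  intro i _
  simp only [Pi.add_apply, Pi.smul_apply, smul_eq_mul]
  have : b = 1 - a := by linarith
  subst this
  ring

lemma convexOn_ph (ν : Measure (Fin d → ℝ)) [IsProbabilityMeasure ν] :
    ConvexOn ℝ univ (ph ν) := by
  refine ⟨convex_univ, fun l _ l' _ a b ha hb hab => ?_⟩
  unfold ph
  simp only [smul_eq_mul]
  rw [← integral_const_mul, ← integral_const_mul, ← integral_add
    ((integrable_ee ν l).const_mul a) ((integrable_ee ν l').const_mul b)]
  exact integral_mono (integrable_ee ν _)
    (((integrable_ee ν l).const_mul a).add ((integrable_ee ν l').const_mul b))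
    (fun x => ee_convex x l l' a b ha hb hab)

lemma continuous_ph (ν : Measure (Fin d → ℝ)) [IsProbabilityMeasure ν] :
    Continuous (ph ν) := by
  rw [← continuousOn_univ]
  exact (convexOn_ph ν).continuousOn isOpen_univ

/-- Lower comparison functional. -/
def gg (ν : Measure (Fin d → ℝ)) (l : Fin d → ℝ) : ℝ :=
  ∫ x, max (∑ i, l i * x i) 0 * ee 0 x ∂ν

lemma gg_integrand_le (l x : Fin d → ℝ) : max (∑ i, l i * x i) 0 * ee 0 x ≤ ee l x := by
  have h : ee l x = Real.exp (∑ i, l i * x i) * ee 0 x := by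
    unfold ee
    rw [← Real.exp_add, ← Finset.sum_add_distrib]
    congr 1
    apply Finset.sum_congr rfl
    intro i _
    simp; ring
  rw [h]
  apply mul_le_mul_of_nonneg_right _ (ee_pos _ _).le
  apply max_le _ (Real.exp_pos _).le
  linarith [Real.add_one_le_exp (∑ i, l i * x i)]

lemma continuous_gg_integrand (l : Fin d → ℝ) :
    Continuous (fun x : Fin d → ℝ => max (∑ i, l i * x i) 0 * ee 0 x) := by
  have := continuous_ee (0 : Fin d → ℝ)
  fun_prop

lemma integrable_gg (ν : Measure (Fin d → ℝ)) [IsProbabilityMeasure ν] (l : Fin d → ℝ) :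
    Integrable (fun x => max (∑ i, l i * x i) 0 * ee 0 x) ν := by
  refine (integrable_ee ν l).mono' (continuous_gg_integrand l).aestronglyMeasurable
    (ae_of_all _ fun x => ?_)
  rw [Real.norm_eq_abs, abs_of_nonneg (mul_nonneg (le_max_right _ _) (ee_pos _ _).le)]
  exact gg_integrand_le l x

lemma gg_le_ph (ν : Measure (Fin d → ℝ)) [IsProbabilityMeasure ν] (l : Fin d → ℝ) :
    gg ν l ≤ ph ν l :=
  integral_mono (integrable_gg ν l) (integrable_ee ν l) (gg_integrand_le l)

lemma convexOn_gg (ν : Measure (Fin d → ℝ)) [IsProbabilityMeasure ν] :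
    ConvexOn ℝ univ (gg ν) := by
  refine ⟨convex_univ, fun l _ l' _ a b ha hb hab => ?_⟩
  unfold gg
  simp only [smul_eq_mul]
  rw [← integral_const_mul, ← integral_const_mul, ← integral_add
    ((integrable_gg ν l).const_mul a) ((integrable_gg ν l').const_mul b)]
  refine integral_mono (integrable_gg ν _)
    (((integrable_gg ν l).const_mul a).add ((integrable_gg ν l').const_mul b))
    (fun x => ?_)
  simp only [Pi.add_apply, Pi.smul_apply, smul_eq_mul]
  rw [← mul_assoc, ← mul_assoc, ← add_mul]
  apply mul_le_mul_of_nonneg_right _ (ee_pos _ _).le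
  have e : ∑ i, (a * l i + b * l' i) * x i = a * (∑ i, l i * x i) + b * ∑ i, l' i * x i := by
    rw [Finset.mul_sum, Finset.mul_sum, ← Finset.sum_add_distrib]
    apply Finset.sum_congr rfl
    intro i _
    ring
  rw [e]
  apply max_le
  · have h1 := mul_le_mul_of_nonneg_left (le_max_left (∑ i, l i * x i) 0) ha
    have h2 := mul_le_mul_of_nonneg_left (le_max_left (∑ i, l' i * x i) 0) hb
    linarith
  · have h1 := mul_nonneg ha (le_max_right (∑ i, l i * x i) 0)
    have h2 := mul_nonneg hb (le_max_right (∑ i, l' i * x i) 0)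
    linarith

lemma continuous_gg (ν : Measure (Fin d → ℝ)) [IsProbabilityMeasure ν] :
    Continuous (gg ν) := by
  rw [← continuousOn_univ]
  exact (convexOn_gg ν).continuousOn isOpen_univ

lemma gg_smul (ν : Measure (Fin d → ℝ)) (c : ℝ) (hc : 0 ≤ c) (l : Fin d → ℝ) :
    gg ν (c • l) = c * gg ν l := by
  unfold gg
  rw [← integral_const_mul]
  congr 1
  ext x
  have e : ∑ i, (c • l) i * x i = c * ∑ i, l i * x i := by
    rw [Finset.mul_sum]
    apply Finset.sum_congr rfl
    intro i _
    simp; ring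
  rw [e, ← mul_assoc]
  congr 1
  rw [mul_max_of_nonneg _ _ hc, mul_zero]

lemma msupport_mem_ae (ν : Measure (Fin d → ℝ)) : ∀ᵐ x ∂ν, x ∈ msupport ν := by
  have h : msupport ν = ν.support := by
    rw [Measure.support_eq_forall_isOpen]
    ext x
    simp only [msupport, mem_setOf_eq]
    exact ⟨fun h u hx hu => h u hu hx, fun h u hu hx => h u hx hu⟩
  rw [h]
  exact Measure.support_mem_ae

lemma gg_pos (ν : Measure (Fin d → ℝ)) [IsProbabilityMeasure ν] (l x : Fin d → ℝ)
    (hx : x ∈ msupport ν) (h : 0 < ∑ i, l i * x i) : 0 < gg ν l := by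
  unfold gg
  rw [integral_pos_iff_support_of_nonneg
    (fun x => mul_nonneg (le_max_right _ _) (ee_pos _ _).le) (integrable_gg ν l)]
  have hU : IsOpen {y : Fin d → ℝ | 0 < ∑ i, l i * y i} :=
    isOpen_lt continuous_const (by fun_prop)
  refine lt_of_lt_of_le (hx _ hU h) (measure_mono fun y hy => ?_)
  exact (mul_pos (lt_of_lt_of_le hy (le_max_left _ _)) (ee_pos _ _)).ne'

/-- The relative interior condition gives strictly positive directions. -/
lemma exists_pos_of_ri (S : Set (Fin d → ℝ))
    (h0 : (0 : Fin d → ℝ) ∈ intrinsicInterior ℝ (convexHull ℝ S)) (l x : Fin d → ℝ)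
    (hx : x ∈ S) (hlx : ∑ i, l i * x i ≠ 0) : ∃ y ∈ S, 0 < ∑ i, l i * y i := by
  by_contra hcon
  push Not at hcon
  have hlin : IsLinearMap ℝ (fun y : Fin d → ℝ => ∑ i, l i * y i) := by
    constructor
    · intro a b
      simp [mul_add, Finset.sum_add_distrib]
    · intro c a
      simp only [Pi.smul_apply, smul_eq_mul, Finset.mul_sum]
      exact Finset.sum_congr rfl fun i _ => by ring
  have hconv : convexHull ℝ S ⊆ {y | ∑ i, l i * y i ≤ 0} :=
    convexHull_min hcon (convex_halfSpace_le hlin 0)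
  have hneg : ∑ i, l i * x i < 0 := lt_of_le_of_ne (hcon x hx) hlx
  obtain ⟨y, hy, hy0⟩ := mem_intrinsicInterior.1 h0
  have hxa : x ∈ affineSpan ℝ (convexHull ℝ S) := subset_affineSpan _ _ (subset_convexHull _ _ hx)
  have h0a : (0 : Fin d → ℝ) ∈ affineSpan ℝ (convexHull ℝ S) := hy0 ▸ y.2
  have hta : ∀ t : ℝ, t • x ∈ affineSpan ℝ (convexHull ℝ S) := by
    intro t
    have := AffineMap.lineMap_mem t h0a hxa
    simpa [AffineMap.lineMap_apply] using this
  let f : ℝ → affineSpan ℝ (convexHull ℝ S) := fun t => ⟨t • x, hta t⟩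
  have hf : Continuous f := by
    apply Continuous.subtype_mk
    fun_prop
  have hf0 : f 0 = y := by
    apply Subtype.ext
    simp [f, hy0]
  have hnear : ∀ᶠ t in 𝓝 (0 : ℝ), f t ∈ ((↑) ⁻¹' (convexHull ℝ S) : Set (affineSpan ℝ (convexHull ℝ S))) := by
    apply hf.continuousAt.eventually
    rw [hf0]
    exact mem_interior_iff_mem_nhds.1 hy
  obtain ⟨t, ht, htS⟩ := (hnear.filter_mono nhdsWithin_le_nhds |>.and
    (self_mem_nhdsWithin : Iio (0:ℝ) ∈ 𝓝[<] 0)).exists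
  have := hconv ht
  have e := hlin.map_smul t x
  simp only [smul_eq_mul] at e
  simp only [mem_setOf_eq, f] at this
  rw [e] at this
  have htS' : t < 0 := htS
  nlinarith

lemma exists_min (ν : Measure (Fin d → ℝ)) [IsProbabilityMeasure ν]
    (h0 : (0 : Fin d → ℝ) ∈ intrinsicInterior ℝ (convexHull ℝ (msupport ν))) :
    ∃ l, ∀ l', ph ν l ≤ ph ν l' := by
  let N : Submodule ℝ (Fin d → ℝ) :=
    { carrier := {l | ∀ x ∈ msupport ν, ∑ i, l i * x i = 0}
      add_mem' := by
        intro a b ha hb x hx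
        simp [add_mul, Finset.sum_add_distrib, ha x hx, hb x hx]
      zero_mem' := by intro x _; simp
      smul_mem' := by
        intro c a ha x hx
        have := ha x hx
        simp only [Pi.smul_apply, smul_eq_mul, mul_assoc]
        rw [← Finset.mul_sum, this, mul_zero] }
  obtain ⟨M, hM⟩ := Submodule.exists_isCompl N
  -- reduce to `M`
  have hred : ∀ l, ∃ m : M, ph ν m = ph ν l := by
    intro l
    have : l ∈ N ⊔ M := by rw [hM.sup_eq_top]; trivial
    obtain ⟨n, hn, m, hm, rfl⟩ := Submodule.mem_sup.1 this
    refine ⟨⟨m, hm⟩, ?_⟩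
    apply integral_congr_ae
    filter_upwards [msupport_mem_ae ν] with x hx
    have := hn x hx
    unfold ee
    congr 1
    have : ∑ i, ((n + m) i * x i - x i ^ 2) = ∑ i, n i * x i + ∑ i, (m i * x i - x i ^ 2) := by
      rw [← Finset.sum_add_distrib]
      exact Finset.sum_congr rfl fun i _ => by simp; ring
    rw [this, hn x hx, zero_add]
  have hposM : ∀ m : M, m ≠ 0 → 0 < gg ν m := by
    intro m hm
    have hmN : (m : Fin d → ℝ) ∉ N := by
      intro hmN
      apply hm
      have := Submodule.disjoint_def.1 hM.disjoint _ hmN m.2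
      exact Subtype.ext this
    have : ∃ x ∈ msupport ν, ∑ i, (m : Fin d → ℝ) i * x i ≠ 0 := by
      by_contra hcon
      push Not at hcon
      exact hmN hcon
    obtain ⟨x, hx, hne⟩ := this
    obtain ⟨y, hy, hpos⟩ := exists_pos_of_ri _ h0 _ x hx hne
    exact gg_pos ν _ y hy hpos
  have hcontg : Continuous (fun m : M => gg ν m) := (continuous_gg ν).comp continuous_subtype_val
  have hcontp : Continuous (fun m : M => ph ν m) := (continuous_ph ν).comp continuous_subtype_val
  have hlb : ∃ c > 0, ∀ m : M, c * ‖m‖ ≤ gg ν m := by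
    rcases (Metric.sphere (0 : M) 1).eq_empty_or_nonempty with he | hne
    · refine ⟨1, one_pos, fun m => ?_⟩
      have hm : m = 0 := by
        by_contra hm
        have : (‖m‖⁻¹ • m) ∈ Metric.sphere (0 : M) 1 := by
          simp [norm_smul, hm]
        rw [he] at this
        exact this
      subst hm
      simp [gg]
    · obtain ⟨u, hu, hmin⟩ := (isCompact_sphere (0 : M) 1).exists_isMinOn hne hcontg.continuousOn
      have hu0 : u ≠ 0 := by
        rintro rfl
        simp at hu
      refine ⟨gg ν u, hposM u hu0, fun m => ?_⟩
      by_cases hm : m = 0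
      · subst hm; simp [gg]
      have hs : (‖m‖⁻¹ • m) ∈ Metric.sphere (0 : M) 1 := by
        simp [norm_smul, hm]
      have h1 : gg ν u ≤ gg ν (‖m‖⁻¹ • m : M) := hmin hs
      rw [Submodule.coe_smul, gg_smul _ _ (by positivity)] at h1
      have hmp : 0 < ‖m‖ := norm_pos_iff.2 hm
      calc gg ν u * ‖m‖ ≤ (‖m‖⁻¹ * gg ν m) * ‖m‖ := mul_le_mul_of_nonneg_right h1 hmp.le
        _ = gg ν m := by field_simp
  obtain ⟨c, hc, hlb⟩ := hlb
  have hlim : Tendsto (fun m : M => ph ν m) (cocompact M) atTop := by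
    refine tendsto_atTop_mono (fun m => (hlb m).trans (gg_le_ph ν m)) ?_
    exact (tendsto_norm_cocompact_atTop (E := M)).const_mul_atTop hc
  obtain ⟨m, hm⟩ := hcontp.exists_forall_le hlim
  refine ⟨m, fun l' => ?_⟩
  obtain ⟨m', hm'⟩ := hred l'
  rw [← hm']
  exact hm m'


lemma sq_norm_le (x : Fin d → ℝ) : ‖x‖ ^ 2 ≤ ∑ i, x i ^ 2 := by
  have h : ‖x‖ ≤ Real.sqrt (∑ i, x i ^ 2) := by
    rw [pi_norm_le_iff_of_nonneg (Real.sqrt_nonneg _)]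
    intro i
    apply Real.le_sqrt_of_sq_le
    rw [Real.norm_eq_abs, sq_abs]
    exact Finset.single_le_sum (f := fun i => x i ^ 2) (fun j _ => sq_nonneg (x j))
      (Finset.mem_univ i)
  calc ‖x‖ ^ 2 ≤ (Real.sqrt (∑ i, x i ^ 2)) ^ 2 := by gcongr
    _ = _ := Real.sq_sqrt (Finset.sum_nonneg fun i _ => sq_nonneg _)

/-- The tilted measure. -/
def rr (ν : Measure (Fin d → ℝ)) (l : Fin d → ℝ) : Measure (Fin d → ℝ) :=
  ν.withDensity (fun x => ENNReal.ofReal (ee l x))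

lemma measurable_ofReal_ee (l : Fin d → ℝ) : Measurable (fun x => ENNReal.ofReal (ee l x)) :=
  (continuous_ee l).measurable.ennreal_ofReal

lemma integrable_rr_iff (ν : Measure (Fin d → ℝ)) (l : Fin d → ℝ) (g : (Fin d → ℝ) → ℝ) :
    Integrable g (rr ν l) ↔ Integrable (fun x => ee l x * g x) ν := by
  unfold rr
  rw [integrable_withDensity_iff_integrable_smul' (measurable_ofReal_ee l)
    (ae_of_all _ fun x => ENNReal.ofReal_lt_top)]
  simp [ENNReal.toReal_ofReal (ee_pos l _).le]

lemma integral_rr (ν : Measure (Fin d → ℝ)) (l : Fin d → ℝ) (g : (Fin d → ℝ) → ℝ) :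
    ∫ x, g x ∂(rr ν l) = ∫ x, ee l x * g x ∂ν := by
  unfold rr
  rw [integral_withDensity_eq_integral_toReal_smul (measurable_ofReal_ee l)
    (ae_of_all _ fun x => ENNReal.ofReal_lt_top)]
  simp [ENNReal.toReal_ofReal (ee_pos l _).le]

lemma ee_shift (l x : Fin d → ℝ) (i : Fin d) (t : ℝ) :
    ee l x * Real.exp (t * x i) = ee (l + Pi.single i t) x := by
  unfold ee
  rw [← Real.exp_add]
  congr 1
  have h : t * x i = ∑ j, (Pi.single i t : Fin d → ℝ) j * x j := by
    rw [Finset.sum_eq_single i]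
    · simp
    · intro j _ hj
      simp [Pi.single_eq_of_ne hj]
    · simp
  rw [h, ← Finset.sum_add_distrib]
  exact Finset.sum_congr rfl fun j _ => by simp only [Pi.add_apply]; ring

lemma integrable_coord (ν : Measure (Fin d → ℝ)) [IsProbabilityMeasure ν] (l : Fin d → ℝ)
    (i : Fin d) : Integrable (fun x => x i) (rr ν l) := by
  rw [integrable_rr_iff]
  refine Integrable.of_bound
    ((continuous_ee l).mul (continuous_apply i)).aestronglyMeasurable
    (Real.exp (∑ i, l i ^ 2 / 4) + 2 * Real.exp (∑ i, l i ^ 2 / 2)) (ae_of_all _ fun x => ?_)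
  rw [Real.norm_eq_abs, abs_mul, abs_of_pos (ee_pos l x)]
  have h1 := ee_le l x
  have h2 := sq_ee_le l x
  have h3 : |x i| ≤ 1 + ∑ i, x i ^ 2 := by
    have h4 : x i ^ 2 ≤ ∑ i, x i ^ 2 :=
      Finset.single_le_sum (f := fun i => x i ^ 2) (fun j _ => sq_nonneg (x j)) (Finset.mem_univ i)
    rw [← sq_abs] at h4
    nlinarith [sq_nonneg (|x i| - 1), abs_nonneg (x i)]
  have := mul_le_mul_of_nonneg_left h3 (ee_pos l x).le
  nlinarith

lemma min_moment (ν : Measure (Fin d → ℝ)) [IsProbabilityMeasure ν] (l : Fin d → ℝ)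
    (hl : ∀ l', ph ν l ≤ ph ν l') (i : Fin d) :
    ∫⁻ x, ENNReal.ofReal (ee l x) * ENNReal.ofReal (x i) ∂ν
      = ∫⁻ x, ENNReal.ofReal (ee l x) * ENNReal.ofReal (-x i) ∂ν := by
  have hset : integrableExpSet (fun x : Fin d → ℝ => x i) (rr ν l) = univ := by
    ext t
    simp only [integrableExpSet, mem_univ, iff_true]
    show Integrable _ _
    rw [integrable_rr_iff]
    simp only [ee_shift]
    exact integrable_ee ν _
  have hmgf : ∀ t, mgf (fun x : Fin d → ℝ => x i) (rr ν l) t = ph ν (l + Pi.single i t) := by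
    intro t
    unfold mgf
    rw [integral_rr]
    simp only [ee_shift]
    rfl
  have hder := deriv_mgf_zero (X := fun x : Fin d → ℝ => x i) (μ := rr ν l)
    (by rw [hset]; simp)
  have hmin : IsLocalMin (mgf (fun x : Fin d → ℝ => x i) (rr ν l)) 0 := by
    apply Filter.Eventually.of_forall
    intro t
    simp only [hmgf]
    simpa using hl _
  rw [hmin.deriv_eq_zero] at hder
  have hinteg := integrable_coord ν l i
  rw [integral_eq_lintegral_pos_part_sub_lintegral_neg_part hinteg] at hder
  have hp : ∫⁻ x : Fin d → ℝ, ENNReal.ofReal (x i) ∂(rr ν l) ≠ ∞ :=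
    hinteg.lintegral_lt_top.ne
  have hn : ∫⁻ x : Fin d → ℝ, ENNReal.ofReal (-x i) ∂(rr ν l) ≠ ∞ :=
    hinteg.neg.lintegral_lt_top.ne
  have heq := (ENNReal.toReal_eq_toReal_iff' hp hn).1 (by linarith)
  unfold rr at heq
  rw [lintegral_withDensity_eq_lintegral_mul _ (measurable_ofReal_ee l) (by fun_prop),
    lintegral_withDensity_eq_lintegral_mul _ (measurable_ofReal_ee l) (by fun_prop)] at heq
  exact heq

lemma min_tendsto (ν : Measure (Fin d → ℝ)) [IsProbabilityMeasure ν] (l : Fin d → ℝ)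
    (hl : ∀ l', ph ν l ≤ ph ν l') (lk : ℕ → Fin d → ℝ)
    (hlk : ∀ k, ph ν (lk k) ≤ ph ν l + (1 / 2) ^ k) :
    ∀ᵐ x ∂ν, Tendsto (fun k => ee (lk k) x) atTop (𝓝 (ee l x)) := by
  have hsq : ∀ k x, (Real.sqrt (ee (lk k) x) - Real.sqrt (ee l x)) ^ 2
      = ee (lk k) x + ee l x - 2 * ee ((1 / 2 : ℝ) • (lk k + l)) x := by
    intro k x
    have h : Real.sqrt (ee (lk k) x) * Real.sqrt (ee l x) = ee ((1 / 2 : ℝ) • (lk k + l)) x := by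
      unfold ee
      rw [← Real.exp_half, ← Real.exp_half, ← Real.exp_add]
      congr 1
      rw [Finset.sum_div, Finset.sum_div, ← Finset.sum_add_distrib]
      exact Finset.sum_congr rfl fun i _ => by simp; ring
    rw [← h, sub_sq, Real.sq_sqrt (ee_pos _ _).le, Real.sq_sqrt (ee_pos _ _).le]
    ring
  have hinteg : ∀ k, Integrable
      (fun x => (Real.sqrt (ee (lk k) x) - Real.sqrt (ee l x)) ^ 2) ν := by
    intro k
    simp only [hsq]
    exact ((integrable_ee ν _).add (integrable_ee ν _)).sub ((integrable_ee ν _).const_mul 2)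
  have hle : ∀ k, ∫ x, (Real.sqrt (ee (lk k) x) - Real.sqrt (ee l x)) ^ 2 ∂ν ≤ (1 / 2) ^ k := by
    intro k
    simp only [hsq]
    have hadd : Integrable (fun x => ee (lk k) x + ee l x) ν :=
      (integrable_ee ν _).add (integrable_ee ν _)
    rw [integral_sub hadd ((integrable_ee ν _).const_mul 2), integral_add (integrable_ee ν _) (integrable_ee ν _),
      integral_const_mul]
    have h1 := hlk k
    have h2 := hl ((1 / 2 : ℝ) • (lk k + l))
    unfold ph at h1 h2
    linarith
  have hle' : ∀ k, ∫⁻ x, ENNReal.ofReal ((Real.sqrt (ee (lk k) x) - Real.sqrt (ee l x)) ^ 2) ∂ν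
      ≤ ENNReal.ofReal ((1 / 2) ^ k) := by
    intro k
    rw [← ofReal_integral_eq_lintegral_ofReal (hinteg k) (ae_of_all _ fun x => sq_nonneg _)]
    exact ENNReal.ofReal_le_ofReal (hle k)
  have hsum : ∫⁻ x, ∑' k, ENNReal.ofReal
      ((Real.sqrt (ee (lk k) x) - Real.sqrt (ee l x)) ^ 2) ∂ν ≠ ∞ := by
    rw [lintegral_tsum (fun k => (hinteg k).aestronglyMeasurable.aemeasurable.ennreal_ofReal)]
    refine ne_top_of_le_ne_top ?_ (ENNReal.tsum_le_tsum hle')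
    have hs : Summable (fun k : ℕ => ((1 / 2 : ℝ)) ^ k) := summable_geometric_two
    rw [← ENNReal.ofReal_tsum_of_nonneg (fun k => by positivity) hs]
    exact ENNReal.ofReal_ne_top
  have hae := ae_lt_top' (AEMeasurable.ennreal_tsum
    (fun k => (hinteg k).aestronglyMeasurable.aemeasurable.ennreal_ofReal)) hsum
  filter_upwards [hae] with x hx
  have h1 := ENNReal.tendsto_atTop_zero_of_tsum_ne_top hx.ne
  have h2 := (ENNReal.tendsto_toReal ENNReal.zero_ne_top).comp h1
  have h3 : Tendsto (fun k => (Real.sqrt (ee (lk k) x) - Real.sqrt (ee l x)) ^ 2) atTop (𝓝 0) := by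
    refine h2.congr fun k => ?_
    simp [ENNReal.toReal_ofReal (sq_nonneg _)]
  have h4 : Tendsto (fun k => Real.sqrt (ee (lk k) x) - Real.sqrt (ee l x)) atTop (𝓝 0) := by
    have := (Real.continuous_sqrt.tendsto 0).comp h3
    simp only [Real.sqrt_zero] at this
    rw [tendsto_zero_iff_abs_tendsto_zero]
    refine this.congr fun k => ?_
    simp [Real.sqrt_sq_eq_abs]
  have h5 : Tendsto (fun k => Real.sqrt (ee (lk k) x)) atTop (𝓝 (Real.sqrt (ee l x))) := by
    have := h4.add_const (Real.sqrt (ee l x))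
    simpa using this
  have h6 := h5.pow 2
  simpa [Real.sq_sqrt (ee_pos _ _).le] using h6

/-- A density which turns `ν` into a centred law with finite second moment. -/
def Good (ν : Measure (Fin d → ℝ)) (z : (Fin d → ℝ) → ℝ≥0∞) : Prop :=
  ∫⁻ x, z x ∂ν = 1 ∧
  (∀ i, ∫⁻ x, z x * ENNReal.ofReal (x i) ∂ν = ∫⁻ x, z x * ENNReal.ofReal (-x i) ∂ν) ∧
  ∫⁻ x, z x * ‖x‖ₑ ^ 2 ∂ν ≠ ∞

lemma good_of_min (ν : Measure (Fin d → ℝ)) [IsProbabilityMeasure ν] (l : Fin d → ℝ)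
    (hl : ∀ l', ph ν l ≤ ph ν l') (z : (Fin d → ℝ) → ℝ≥0∞) (c : ℝ≥0∞)
    (hz : ∀ᵐ x ∂ν, z x = c * ENNReal.ofReal (ee l x))
    (hc : c = (∫⁻ x, ENNReal.ofReal (ee l x) ∂ν)⁻¹) : Good ν z := by
  have hI : ∫⁻ x, ENNReal.ofReal (ee l x) ∂ν = ENNReal.ofReal (ph ν l) :=
    (ofReal_integral_eq_lintegral_ofReal (integrable_ee ν l)
      (ae_of_all _ fun x => (ee_pos l x).le)).symm
  have hph : 0 < ph ν l := by
    unfold ph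
    rw [integral_pos_iff_support_of_nonneg (fun x => (ee_pos l x).le) (integrable_ee ν l)]
    have : Function.support (fun x => ee l x) = univ := by
      ext x; simp [(ee_pos l x).ne']
    rw [this]; simp
  have hctop : c ≠ ∞ := by
    rw [hc, hI]; simp [hph]
  refine ⟨?_, fun i => ?_, ?_⟩
  · rw [lintegral_congr_ae hz, lintegral_const_mul _ (measurable_ofReal_ee l), hc, hI]
    apply ENNReal.inv_mul_cancel
    · simp [hph]
    · simp
  · have h1 : ∀ g : (Fin d → ℝ) → ℝ≥0∞, Measurable g → ∫⁻ x, z x * g x ∂ν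
        = c * ∫⁻ x, ENNReal.ofReal (ee l x) * g x ∂ν := by
      intro g hg
      have hm : Measurable (fun x => ENNReal.ofReal (ee l x) * g x) :=
        (measurable_ofReal_ee l).mul hg
      rw [← lintegral_const_mul _ hm]
      apply lintegral_congr_ae
      filter_upwards [hz] with x hx
      rw [hx, mul_assoc]
    rw [h1 _ (by fun_prop), h1 _ (by fun_prop), min_moment ν l hl i]
  · have h1 : ∫⁻ x, z x * ‖x‖ₑ ^ 2 ∂ν
        ≤ ∫⁻ x, c * ENNReal.ofReal (2 * Real.exp (∑ i, l i ^ 2 / 2)) ∂ν := by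
      apply lintegral_mono_ae
      filter_upwards [hz] with x hx
      rw [hx, mul_assoc]
      gcongr
      rw [← ofReal_norm, ← ENNReal.ofReal_pow (norm_nonneg _),
        ← ENNReal.ofReal_mul (ee_pos l x).le]
      apply ENNReal.ofReal_le_ofReal
      have := mul_le_mul_of_nonneg_left (sq_norm_le x) (ee_pos l x).le
      have h2 := sq_ee_le l x
      linarith
    refine ne_top_of_le_ne_top ?_ h1
    simp only [lintegral_const, measure_univ, mul_one]
    exact ENNReal.mul_ne_top hctop ENNReal.ofReal_ne_top

lemma exists_good {Ω : Type*} {m : MeasurableSpace Ω} (κ : Kernel Ω (Fin d → ℝ))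
    [IsMarkovKernel κ] :
    ∃ z : Ω → (Fin d → ℝ) → ℝ≥0∞, Measurable (Function.uncurry z) ∧
      (∀ ω x, z ω x ≠ 0) ∧ (∀ ω x, z ω x ≠ ∞) ∧
      ∀ ω, (0 : Fin d → ℝ) ∈ intrinsicInterior ℝ (convexHull ℝ (msupport (κ ω))) →
        Good (κ ω) (z ω) := by
  let u : ℕ → (Fin d → ℝ) := TopologicalSpace.denseSeq (Fin d → ℝ)
  let I : Ω → ℝ := fun ω => ⨅ j, ph (κ ω) (u j)
  have hG0 : ∀ ω j, 0 ≤ ph (κ ω) (u j) := fun ω j => integral_nonneg fun x => (ee_pos _ _).le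
  have hbdd : ∀ ω, BddBelow (range fun j => ph (κ ω) (u j)) := by
    intro ω
    refine ⟨0, ?_⟩
    rintro _ ⟨j, rfl⟩
    exact hG0 ω j
  have hGm : ∀ j, Measurable (fun ω => ph (κ ω) (u j)) := by
    intro j
    have : StronglyMeasurable (fun ω => ∫ x, ee (u j) x ∂(κ ω)) :=
      (continuous_ee (u j)).stronglyMeasurable.integral_kernel
    exact this.measurable
  have hIm : Measurable I := Measurable.iInf hGm
  have hex : ∀ k : ℕ, ∀ ω, ∃ j, ph (κ ω) (u j) < I ω + (1 / 2) ^ k := by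
    intro k ω
    apply exists_lt_of_ciInf_lt
    have : (0 : ℝ) < (1 / 2) ^ k := by positivity
    show I ω < _
    linarith
  classical
  let N : ℕ → Ω → ℕ := fun k ω => Nat.find (hex k ω)
  have hN : ∀ k, Measurable (N k) := fun k =>
    measurable_find (hex k) (fun j => measurableSet_lt (hGm j) (hIm.add_const _))
  let h : Ω × (Fin d → ℝ) → ℝ≥0∞ := fun p =>
    limsup (fun k => ENNReal.ofReal (ee (u (N k p.1)) p.2)) atTop
  have hh : Measurable h := by
    apply Measurable.limsup
    intro k
    apply Measurable.ennreal_ofReal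
    have : Measurable (fun p : Ω × (Fin d → ℝ) => (u (N k p.1), p.2)) :=
      ((measurable_from_nat (f := u)).comp ((hN k).comp measurable_fst)).prodMk measurable_snd
    exact continuous_ee_uncurry.measurable.comp this
  let z0 : Ω × (Fin d → ℝ) → ℝ≥0∞ := fun p => if h p = 0 ∨ h p = ∞ then 1 else h p
  have hz0 : Measurable z0 :=
    Measurable.ite ((hh (measurableSet_singleton 0)).union (hh (measurableSet_singleton ∞)))
      measurable_const hh
  have hz00 : ∀ p, z0 p ≠ 0 := by
    intro p; simp only [z0]; split_ifs with hp
    · simp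
    · tauto
  have hz0t : ∀ p, z0 p ≠ ∞ := by
    intro p; simp only [z0]; split_ifs with hp
    · simp
    · tauto
  let C : Ω → ℝ≥0∞ := fun ω => ∫⁻ x, z0 (ω, x) ∂(κ ω)
  have hC : Measurable C := hz0.lintegral_kernel_prod_right'
  let z : Ω → (Fin d → ℝ) → ℝ≥0∞ := fun ω x =>
    if C ω = 0 ∨ C ω = ∞ then 1 else (C ω)⁻¹ * z0 (ω, x)
  refine ⟨z, ?_, ?_, ?_, ?_⟩
  · have hs : MeasurableSet {p : Ω × (Fin d → ℝ) | C p.1 = 0 ∨ C p.1 = ∞} :=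
      ((hC.comp measurable_fst) (measurableSet_singleton 0)).union
        ((hC.comp measurable_fst) (measurableSet_singleton ∞))
    exact Measurable.ite hs measurable_const ((hC.comp measurable_fst).inv.mul hz0)
  · intro ω x
    simp only [z]; split_ifs with hp
    · simp
    · push Not at hp
      simp [hp.2, hz00]
  · intro ω x
    simp only [z]; split_ifs with hp
    · simp
    · push Not at hp
      exact ENNReal.mul_ne_top (by simp [hp.1]) (hz0t _)
  · intro ω hω
    obtain ⟨l, hl⟩ := exists_min (κ ω) hω
    have hIle : I ω ≤ ph (κ ω) l := by
      apply le_of_forall_pos_lt_add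
      intro ε hε
      have hopen : IsOpen {l' | ph (κ ω) l' < ph (κ ω) l + ε} :=
        isOpen_lt (continuous_ph _) continuous_const
      obtain ⟨j, hj⟩ := (TopologicalSpace.denseRange_denseSeq (Fin d → ℝ)).exists_mem_open hopen
        ⟨l, by show ph (κ ω) l < _; linarith⟩
      exact lt_of_le_of_lt (ciInf_le (hbdd ω) j) hj
    have hconv := min_tendsto (κ ω) l hl (fun k => u (N k ω)) (fun k => by
      have := Nat.find_spec (hex k ω)
      have h2 : ph (κ ω) (u (N k ω)) < I ω + (1 / 2) ^ k := this
      linarith)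
    have hz0e : ∀ᵐ x ∂(κ ω), z0 (ω, x) = ENNReal.ofReal (ee l x) := by
      filter_upwards [hconv] with x hx
      have h1 : h (ω, x) = ENNReal.ofReal (ee l x) :=
        ((ENNReal.continuous_ofReal.tendsto _).comp hx).limsup_eq
      simp only [z0, h1]
      simp [ee_pos]
    have hCe : C ω = ∫⁻ x, ENNReal.ofReal (ee l x) ∂(κ ω) := lintegral_congr_ae hz0e
    have hCt : C ω ≠ ∞ := by
      rw [hCe]
      exact (integrable_ee (κ ω) l).lintegral_lt_top.ne
    have hC0 : C ω ≠ 0 := by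
      intro h0
      have := (lintegral_eq_zero_iff (hz0.comp measurable_prodMk_left)).1 h0
      obtain ⟨x, hx⟩ := this.exists
      exact hz00 _ hx
    refine good_of_min (κ ω) l hl _ (C ω)⁻¹ ?_ (by rw [hCe])
    filter_upwards [hz0e] with x hx
    simp [z, hC0, hCt, hx]

/-- Refinement: if `0` is an atom, the density can be chosen to concentrate near `0`. -/
lemma exists_good_small {Ω : Type*} {m : MeasurableSpace Ω} (κ : Kernel Ω (Fin d → ℝ))
    [IsMarkovKernel κ] (ε : ℝ≥0∞) (hε : ε ≠ 0) (hε1 : ε ≤ 1) :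
    ∃ z : Ω → (Fin d → ℝ) → ℝ≥0∞, Measurable (Function.uncurry z) ∧
      (∀ ω x, z ω x ≠ 0) ∧ (∀ ω x, z ω x ≠ ∞) ∧
      ∀ ω, (0 : Fin d → ℝ) ∈ intrinsicInterior ℝ (convexHull ℝ (msupport (κ ω))) →
        κ ω {0} ≠ 0 → Good (κ ω) (z ω) ∧
          ∫⁻ x, z ω x * (({0}ᶜ : Set (Fin d → ℝ)).indicator 1 x + ‖x‖ₑ ^ 2) ∂(κ ω) ≤ ε := by
  obtain ⟨z, hz, hz0, hzt, hg⟩ := exists_good κ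
  let K : Ω → ℝ≥0∞ := fun ω => ∫⁻ x, z ω x * (1 + ‖x‖ₑ ^ 2) ∂(κ ω)
  have hK : Measurable K := by
    have : Measurable (fun p : Ω × (Fin d → ℝ) => z p.1 p.2 * (1 + ‖p.2‖ₑ ^ 2)) :=
      hz.mul (by fun_prop)
    exact this.lintegral_kernel_prod_right'
  let c : Ω → ℝ≥0∞ := fun ω => κ ω {0}
  have hcm : Measurable c := κ.measurable_coe (measurableSet_singleton 0)
  have hct : ∀ ω, c ω ≠ ∞ := fun ω => measure_ne_top _ _
  let a : Ω → ℝ≥0∞ := fun ω => ε / K ω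
  have ha : Measurable a := measurable_const.div hK
  let S : Set Ω := {ω | c ω = 0 ∨ K ω = ∞ ∨ K ω < 1}
  have hS : MeasurableSet S :=
    (hcm (measurableSet_singleton 0)).union
      ((hK (measurableSet_singleton ∞)).union (measurableSet_lt hK measurable_const))
  classical
  let z' : Ω → (Fin d → ℝ) → ℝ≥0∞ := fun ω x =>
    if ω ∈ S then 1 else
      a ω * z ω x + (1 - a ω) / c ω * ({0} : Set (Fin d → ℝ)).indicator 1 x
  have hεt : ε ≠ ∞ := ne_top_of_le_ne_top (by simp) hε1
  have ha1 : ∀ ω, ω ∉ S → a ω ≤ 1 := by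
    intro ω hω
    have : 1 ≤ K ω := by
      by_contra hlt
      exact hω (Or.inr (Or.inr (not_le.1 hlt)))
    exact ENNReal.div_le_of_le_mul (by simpa using hε1.trans this)
  refine ⟨z', ?_, ?_, ?_, ?_⟩
  · refine Measurable.ite (measurable_fst hS) measurable_const ?_
    refine ((ha.comp measurable_fst).mul hz).add ?_
    refine (((measurable_const.sub ha).div hcm).comp measurable_fst).mul ?_
    exact (measurable_one.indicator (measurableSet_singleton 0)).comp measurable_snd
  · intro ω x
    simp only [z']; split_ifs with h
    · simp
    · have hKt : K ω ≠ ∞ := fun hK => h (Or.inr (Or.inl hK))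
      have : a ω * z ω x ≠ 0 := mul_ne_zero (ENNReal.div_ne_zero.2 ⟨hε, hKt⟩) (hz0 _ _)
      intro h0
      exact this (add_eq_zero.1 h0).1
  · intro ω x
    simp only [z']; split_ifs with h
    · simp
    · have hc0 : c ω ≠ 0 := fun hc => h (Or.inl hc)
      have ha' := ha1 ω h
      apply ENNReal.add_ne_top.2
      refine ⟨ENNReal.mul_ne_top (ne_top_of_le_ne_top (by simp) ha') (hzt _ _), ?_⟩
      refine ENNReal.mul_ne_top (ENNReal.div_ne_top (by
        exact ne_top_of_le_ne_top (by simp) tsub_le_self) hc0) ?_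
      by_cases hx : x ∈ ({0} : Set (Fin d → ℝ)) <;> simp [hx]
  · intro ω hω hc0
    obtain ⟨h1, h2, h3⟩ := hg ω hω
    have hzm : Measurable (z ω) := hz.comp measurable_prodMk_left
    have hKe : K ω = 1 + ∫⁻ x, z ω x * ‖x‖ₑ ^ 2 ∂(κ ω) := by
      simp only [K, mul_add, mul_one]
      rw [lintegral_add_left hzm, h1]
    have hKt : K ω ≠ ∞ := by rw [hKe]; simp [h3]
    have hK1 : 1 ≤ K ω := by rw [hKe]; simp
    have hnS : ω ∉ S := by
      rintro (h | h | h)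
      · exact hc0 h
      · exact hKt h
      · exact absurd hK1 (not_le.2 h)
    have ha' := ha1 ω hnS
    have hform : ∀ g : (Fin d → ℝ) → ℝ≥0∞, Measurable g →
        ∫⁻ x, z' ω x * g x ∂(κ ω) = a ω * ∫⁻ x, z ω x * g x ∂(κ ω) + (1 - a ω) * g 0 := by
      intro g hgm
      have e : ∀ x, z' ω x * g x = a ω * (z ω x * g x)
          + ({0} : Set (Fin d → ℝ)).indicator (fun _ => (1 - a ω) / c ω * g 0) x := by
        intro x
        simp only [z', if_neg hnS, add_mul, mul_assoc]
        congr 1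
        by_cases hx : x = 0
        · subst hx; simp
        · simp [hx]
      simp only [e]
      rw [lintegral_add_left (by fun_prop), lintegral_const_mul _ (by fun_prop),
        lintegral_indicator (measurableSet_singleton 0)]
      congr 1
      rw [setLIntegral_const]
      change (1 - a ω) / c ω * g 0 * c ω = _
      rw [mul_right_comm, ENNReal.div_mul_cancel hc0 (hct ω)]
    have hind : Measurable (({0}ᶜ : Set (Fin d → ℝ)).indicator (1 : (Fin d → ℝ) → ℝ≥0∞)) :=
      measurable_one.indicator (measurableSet_singleton 0).compl
    refine ⟨⟨?_, fun i => ?_, ?_⟩, ?_⟩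
    · have := hform (fun _ => 1) measurable_const
      simp only [mul_one] at this
      rw [this, h1, mul_one]
      exact add_tsub_cancel_of_le ha'
    · rw [hform _ (by fun_prop), hform _ (by fun_prop), h2 i]
      simp
    · rw [hform _ (by fun_prop)]
      simp only [enorm_zero, ne_eq, OfNat.ofNat_ne_zero, not_false_eq_true, zero_pow, mul_zero,
        add_zero]
      exact ENNReal.mul_ne_top (ne_top_of_le_ne_top (by simp) ha') h3
    · rw [hform (fun x => ({0}ᶜ : Set (Fin d → ℝ)).indicator 1 x + ‖x‖ₑ ^ 2)
        (hind.add (by fun_prop))]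
      have hle : ∫⁻ x, z ω x * (({0}ᶜ : Set (Fin d → ℝ)).indicator 1 x + ‖x‖ₑ ^ 2) ∂(κ ω)
          ≤ K ω := by
        apply lintegral_mono
        intro x
        dsimp only
        gcongr
        apply Set.indicator_le_self' (fun _ _ => by simp)
      simp only [mem_compl_iff, mem_singleton_iff, not_true_eq_false, not_false_eq_true,
        indicator_of_notMem, enorm_zero, ne_eq, OfNat.ofNat_ne_zero, zero_pow, add_zero, mul_zero]
      calc a ω * _ ≤ a ω * K ω := by gcongr
        _ = ε := ENNReal.div_mul_cancel (fun h => by simp [h] at hK1) hKt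


lemma disint_aux {Ω Ω' E : Type*} [MeasurableSpace Ω] [MeasurableSpace Ω'] [MeasurableSpace E]
    (μ : Measure Ω) [IsProbabilityMeasure μ] (π : Ω → Ω') (hπ : Measurable π)
    (ξ : Ω → E) (hξ : Measurable ξ) (κ : Kernel Ω' E) [IsMarkovKernel κ]
    (h : ∀ B A, MeasurableSet B → MeasurableSet A →
      μ (π ⁻¹' B ∩ ξ ⁻¹' A) = ∫⁻ ω in π ⁻¹' B, κ (π ω) A ∂μ)
    (f : Ω' × E → ℝ≥0∞) (hf : Measurable f) :
    ∫⁻ ω, f (π ω, ξ ω) ∂μ = ∫⁻ ω, ∫⁻ x, f (π ω, x) ∂(κ (π ω)) ∂μ := by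
  have : IsProbabilityMeasure (μ.map π) := Measure.isProbabilityMeasure_map hπ.aemeasurable
  have hpair : Measurable (fun ω => (π ω, ξ ω)) := hπ.prodMk hξ
  have : IsProbabilityMeasure (μ.map (fun ω => (π ω, ξ ω))) :=
    Measure.isProbabilityMeasure_map hpair.aemeasurable
  have heq : μ.map (fun ω => (π ω, ξ ω)) = (μ.map π) ⊗ₘ κ := by
    apply Measure.ext_prod
    intro B A hB hA
    rw [Measure.compProd_apply_prod hB hA, Measure.map_apply hpair (hB.prod hA),
      setLIntegral_map hB (κ.measurable_coe hA) hπ, ← h B A hB hA]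
    rfl
  rw [← lintegral_map hf hpair, heq, Measure.lintegral_compProd hf,
    lintegral_map hf.lintegral_kernel_prod_right' hπ]

lemma disint {Ω E : Type*} {m m0 : MeasurableSpace Ω} [mE : MeasurableSpace E] (hm : m ≤ m0)
    (μ : Measure Ω) [IsProbabilityMeasure μ]
    (ξ : Ω → E) (hξ : Measurable ξ) (κ : @Kernel Ω E m mE) [@IsMarkovKernel Ω E m _ κ]
    (h : ∀ A, MeasurableSet A → (fun ω => (κ ω A).toReal) =ᵐ[μ]
      μ[Set.indicator {ω' | ξ ω' ∈ A} (fun _ => (1 : ℝ)) | m])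
    (f : Ω → E → ℝ≥0∞) (hf : @Measurable _ _ (m.prod mE) _ (Function.uncurry f)) :
    ∫⁻ ω, f ω (ξ ω) ∂μ = ∫⁻ ω, ∫⁻ x, f ω x ∂(κ ω) ∂μ := by
  refine @disint_aux Ω Ω E m0 m mE μ _ id (measurable_id'' hm) ξ hξ κ _ ?_ _ hf
  intro B A hB hA
  simp only [preimage_id, id]
  have hB0 := hm _ hB
  have hA0 : MeasurableSet {ω' | ξ ω' ∈ A} := hξ hA
  have hκm : Measurable (fun ω => κ ω A) := (@Kernel.measurable_coe Ω E m _ κ A hA).mono hm le_rfl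
  have hinteg : Integrable (Set.indicator {ω' | ξ ω' ∈ A} (fun _ => (1 : ℝ))) μ :=
    (integrable_const 1).indicator hA0
  have e1 : ∫ ω in B, (κ ω A).toReal ∂μ = (μ (B ∩ ξ ⁻¹' A)).toReal := by
    rw [setIntegral_congr_ae (g := μ[Set.indicator {ω' | ξ ω' ∈ A} (fun _ => (1 : ℝ)) | m]) hB0
      (by filter_upwards [h A hA] with ω hω _ using hω), setIntegral_condExp hm hinteg hB,
      integral_indicator hA0, Measure.restrict_restrict hA0]
    simp only [integral_const, smul_eq_mul, mul_one, measureReal_def, Measure.restrict_apply_univ]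
    rw [inter_comm]
    rfl
  rw [integral_toReal hκm.aemeasurable
    (ae_of_all _ fun ω => lt_of_le_of_lt (@prob_le_one E _ (κ ω) _ A) (by simp))] at e1
  refine ((ENNReal.toReal_eq_toReal_iff' ?_ (measure_ne_top _ _)).1 e1).symm
  refine ne_top_of_le_ne_top (b := ∫⁻ ω in B, 1 ∂μ) (by simp) ?_
  exact lintegral_mono fun ω => @prob_le_one E _ (κ ω) _ A

/-- Final assembly: from second moment bounds and signed moments to the martingale property. -/
lemma finish {Ω : Type*} {m0 : MeasurableSpace Ω} (Q : Measure Ω) [IsProbabilityMeasure Q]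
    (𝒢 : Filtration ℕ m0) (X : ℕ → Ω → Fin d → ℝ) (hX : Adapted 𝒢 X)
    (h0 : ∫⁻ ω, ‖X 0 ω‖ₑ ^ 2 ∂Q ≠ ∞)
    (h1 : ∫⁻ ω, ‖X 1 ω - X 0 ω‖ₑ ^ 2 ∂Q ≠ ∞)
    (hn : ∀ n, ∫⁻ ω, ‖X (n + 2) ω - X (n + 1) ω‖ₑ ^ 2 ∂Q ≤ ((4 : ℝ≥0∞)⁻¹) ^ n)
    (hm : ∀ n i A, MeasurableSet[𝒢 n] A →
      ∫⁻ ω in A, ENNReal.ofReal ((X (n + 1) ω - X n ω) i) ∂Q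
        = ∫⁻ ω in A, ENNReal.ofReal (-((X (n + 1) ω - X n ω) i)) ∂Q) :
    Martingale X 𝒢 Q ∧ ∃ C : ℝ, ∀ n : ℕ, ∫ ω, ‖X n ω‖ ^ 2 ∂Q ≤ C := by
  have hXm : ∀ n, Measurable (X n) := fun n => (hX n).mono (𝒢.le n) le_rfl
  have hL : ∀ f : Ω → Fin d → ℝ, eLpNorm f 2 Q = (∫⁻ ω, ‖f ω‖ₑ ^ 2 ∂Q) ^ (1 / 2 : ℝ) := by
    intro f
    rw [eLpNorm_eq_lintegral_rpow_enorm_toReal (by simp) (by simp)]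
    simp
  let ξ : ℕ → Ω → Fin d → ℝ := fun n ω => X (n + 1) ω - X n ω
  have hξm : ∀ n, Measurable (ξ n) := fun n => (hXm (n + 1)).sub (hXm n)
  have hξL : ∀ n, eLpNorm (ξ (n + 1)) 2 Q ≤ ((2 : ℝ≥0∞)⁻¹) ^ n := by
    intro n
    rw [hL]
    have h2 : ((2 : ℝ≥0∞)⁻¹) ^ n = (((4 : ℝ≥0∞)⁻¹) ^ n) ^ (1 / 2 : ℝ) := by
      have : ((4 : ℝ≥0∞)⁻¹) ^ n = (((2 : ℝ≥0∞)⁻¹) ^ n) ^ (2 : ℝ) := by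
        rw [ENNReal.rpow_two, ← pow_mul, mul_comm n 2, pow_mul]
        congr 1
        rw [← ENNReal.inv_pow]
        norm_num
      rw [this, ← ENNReal.rpow_mul]
      norm_num
    rw [h2]
    exact ENNReal.rpow_le_rpow (hn n) (by norm_num)
  have hbound : ∀ n, eLpNorm (X (n + 1)) 2 Q ≤ eLpNorm (X 0) 2 Q + eLpNorm (ξ 0) 2 Q
      + ∑ k ∈ Finset.range n, ((2 : ℝ≥0∞)⁻¹) ^ k := by
    intro n
    induction n with
    | zero =>
      have : X (0 + 1) = X 0 + ξ 0 := by ext ω; simp [ξ]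
      rw [this]
      simp only [Finset.range_zero, Finset.sum_empty, add_zero]
      exact eLpNorm_add_le (hXm 0).aestronglyMeasurable (hξm 0).aestronglyMeasurable (by norm_num)
    | succ n ih =>
      have : X (n + 1 + 1) = X (n + 1) + ξ (n + 1) := by ext ω; simp [ξ]
      rw [this, Finset.sum_range_succ, ← add_assoc]
      exact (eLpNorm_add_le (hXm _).aestronglyMeasurable (hξm _).aestronglyMeasurable
        (by norm_num)).trans (add_le_add ih (hξL n))
  let D : ℝ≥0∞ := eLpNorm (X 0) 2 Q + eLpNorm (ξ 0) 2 Q + ∑' k : ℕ, ((2 : ℝ≥0∞)⁻¹) ^ k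
  have hDt : D ≠ ∞ := by
    have ha : eLpNorm (X 0) 2 Q ≠ ∞ := by
      rw [hL]; exact ENNReal.rpow_ne_top_of_nonneg (by norm_num) h0
    have hb : eLpNorm (ξ 0) 2 Q ≠ ∞ := by
      rw [hL]; exact ENNReal.rpow_ne_top_of_nonneg (by norm_num) h1
    have hc : ∑' k : ℕ, ((2 : ℝ≥0∞)⁻¹) ^ k ≠ ∞ := by
      rw [ENNReal.tsum_geometric]
      simp
    exact ENNReal.add_ne_top.2 ⟨ENNReal.add_ne_top.2 ⟨ha, hb⟩, hc⟩
  have hXD : ∀ n, eLpNorm (X n) 2 Q ≤ D := by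
    intro n
    cases n with
    | zero => exact le_self_add.trans le_self_add
    | succ n =>
      refine (hbound n).trans ?_
      simp only [D]
      gcongr
      exact ENNReal.sum_le_tsum _
  have hmem : ∀ n, MemLp (X n) 2 Q := fun n =>
    ⟨(hXm n).aestronglyMeasurable, lt_of_le_of_lt (hXD n) hDt.lt_top⟩
  have hXint : ∀ n, Integrable (X n) Q := fun n => (hmem n).integrable (by norm_num)
  have hXs : StronglyAdapted 𝒢 X := fun n => (hX n).stronglyMeasurable
  constructor
  · refine ⟨hXs, fun i j hij => ?_⟩
    symm
    refine ae_eq_condExp_of_forall_setIntegral_eq (𝒢.le i) (hXint j)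
      (fun s _ _ => (hXint i).integrableOn) (fun A hA _ => ?_)
      (hXs i).aestronglyMeasurable
    induction j, hij using Nat.le_induction with
    | base => rfl
    | succ j hij ih =>
      rw [ih]
      have hA' := 𝒢.mono hij _ hA
      have hz : ∫ ω in A, ξ j ω ∂Q = 0 := by
        have hξi : Integrable (ξ j) (Q.restrict A) :=
          ((hXint (j + 1)).sub (hXint j)).integrableOn
        ext k
        rw [eval_integral (fun k => hξi.eval k)]
        rw [integral_eq_lintegral_pos_part_sub_lintegral_neg_part (hξi.eval k)]
        rw [hm j k A hA']
        simp [ξ]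
      have : ∫ ω in A, ξ j ω ∂Q = ∫ ω in A, X (j + 1) ω ∂Q - ∫ ω in A, X j ω ∂Q :=
        integral_sub (hXint (j + 1)).integrableOn (hXint j).integrableOn
      rw [hz] at this
      exact (sub_eq_zero.1 this.symm).symm
  · refine ⟨(D ^ 2).toReal, fun n => ?_⟩
    have h2 : ∫⁻ ω, ‖X n ω‖ₑ ^ 2 ∂Q ≤ D ^ 2 := by
      have h := hXD n
      rw [hL] at h
      have h3 := ENNReal.rpow_le_rpow h (by norm_num : (0 : ℝ) ≤ 2)
      rw [← ENNReal.rpow_mul] at h3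
      simpa using h3
    rw [integral_eq_lintegral_of_nonneg_ae (ae_of_all _ fun ω => by positivity)
      ((hXm n).norm.pow_const 2).aestronglyMeasurable]
    apply ENNReal.toReal_mono (ENNReal.pow_ne_top hDt)
    refine le_trans (le_of_eq ?_) h2
    apply lintegral_congr
    intro ω
    rw [ENNReal.ofReal_pow (norm_nonneg _), ofReal_norm]


lemma meas_prod {Ω E : Type*} {m : MeasurableSpace Ω} [mE : MeasurableSpace E]
    (H : Ω → ℝ≥0∞) (hH : Measurable[m] H) (z : Ω → E → ℝ≥0∞)
    (hz : @Measurable _ _ (m.prod mE) _ (Function.uncurry z)) (g : E → ℝ≥0∞) (hg : Measurable g) :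
    @Measurable _ _ (m.prod mE) _ (Function.uncurry fun ω x => H ω * (z ω x * g x)) :=
  (hH.comp measurable_fst).mul (hz.mul (hg.comp measurable_snd))

lemma meas_section {Ω E : Type*} {m : MeasurableSpace Ω} [mE : MeasurableSpace E]
    (z : Ω → E → ℝ≥0∞)
    (hz : @Measurable _ _ (m.prod mE) _ (Function.uncurry z)) (ω : Ω) : Measurable (z ω) :=
  hz.comp measurable_prodMk_left

lemma meas_comp {Ω E : Type*} {m m' : MeasurableSpace Ω} (hm : m ≤ m') [mE : MeasurableSpace E]
    (z : Ω → E → ℝ≥0∞)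
    (hz : @Measurable _ _ (m.prod mE) _ (Function.uncurry z)) (ξ : Ω → E) (hξ : Measurable[m'] ξ) :
    Measurable[m'] (fun ω => z ω (ξ ω)) := by
  have h1 : @Measurable Ω (Ω × E) m' (m.prod mE) (fun ω => (ω, ξ ω)) :=
    Measurable.prodMk (f := id) (measurable_id'' hm) hξ
  exact hz.comp h1

lemma meas_enorm_sq {Ω : Type*} {m : MeasurableSpace Ω} (f : Ω → Fin d → ℝ)
    (hf : Measurable[m] f) : Measurable[m] (fun ω => ‖f ω‖ₑ ^ 2) :=
  hf.enorm.pow_const 2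

set_option maxHeartbeats 2000000 in
lemma density {Ω : Type*} {m0 : MeasurableSpace Ω} (μ : Measure Ω) [IsProbabilityMeasure μ]
    (𝒢 : Filtration ℕ m0) (X : ℕ → Ω → Fin d → ℝ) (hX : Adapted 𝒢 X)
    (ν : ℕ → Ω → Measure (Fin d → ℝ))
    (hd : ∀ (n : ℕ) (f : Ω → (Fin d → ℝ) → ℝ≥0∞),
      @Measurable _ _ ((𝒢 n).prod MeasurableSpace.pi) _ (Function.uncurry f) →
      ∫⁻ ω, f ω (X (n + 1) ω - X n ω) ∂μ = ∫⁻ ω, ∫⁻ x, f ω x ∂(ν n ω) ∂μ)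
    (z : ℕ → Ω → (Fin d → ℝ) → ℝ≥0∞)
    (hz : ∀ n, @Measurable _ _ ((𝒢 n).prod MeasurableSpace.pi) _ (Function.uncurry (z n)))
    (hz0 : ∀ n ω x, z n ω x ≠ 0) (hzt : ∀ n ω x, z n ω x ≠ ∞)
    (hz1 : ∀ n, ∀ᵐ ω ∂μ, ∫⁻ x, z n ω x ∂(ν n ω) = 1)
    (hzm : ∀ n, ∀ᵐ ω ∂μ, ∀ i, ∫⁻ x, z n ω x * ENNReal.ofReal (x i) ∂(ν n ω)
      = ∫⁻ x, z n ω x * ENNReal.ofReal (-x i) ∂(ν n ω))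
    (hzs : ∀ n, ∀ᵐ ω ∂μ, ∫⁻ x, z (n + 1) ω x *
      (({0}ᶜ : Set (Fin d → ℝ)).indicator 1 x + ‖x‖ₑ ^ 2) ∂(ν (n + 1) ω) ≤ ((4 : ℝ≥0∞)⁻¹) ^ n)
    (K : Ω → ℝ≥0∞) (hK : Measurable[𝒢 0] K) (hKt : ∀ ω, K ω ≠ ∞)
    (hK0 : ∀ᵐ ω ∂μ, ∫⁻ x, z 0 ω x * ‖x‖ₑ ^ 2 ∂(ν 0 ω) ≤ K ω)
    (hfreeze : ∀ n ω x, X (n + 1) ω - X n ω = 0 → z (n + 1) ω x = 1)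
    (h_incr : ∀ᵐ ω ∂μ,
      (∀ n : ℕ, X (n + 1) ω - X n ω = 0 → X (n + 2) ω - X (n + 1) ω = 0) ∧
      (∃ n : ℕ, X (n + 1) ω - X n ω = 0)) :
    ∃ Q : Measure Ω, IsProbabilityMeasure Q ∧ Q ≪ μ ∧ μ ≪ Q ∧
      ∫⁻ ω, ‖X 0 ω‖ₑ ^ 2 ∂Q ≠ ∞ ∧ ∫⁻ ω, ‖X 1 ω - X 0 ω‖ₑ ^ 2 ∂Q ≠ ∞ ∧
      (∀ n, ∫⁻ ω, ‖X (n + 2) ω - X (n + 1) ω‖ₑ ^ 2 ∂Q ≤ ((4 : ℝ≥0∞)⁻¹) ^ n) ∧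
      (∀ n i A, MeasurableSet[𝒢 n] A →
        ∫⁻ ω in A, ENNReal.ofReal ((X (n + 1) ω - X n ω) i) ∂Q
          = ∫⁻ ω in A, ENNReal.ofReal (-((X (n + 1) ω - X n ω) i)) ∂Q) := by
  let ξ : ℕ → Ω → Fin d → ℝ := fun n ω => X (n + 1) ω - X n ω
  have hξ : ∀ n, Measurable[𝒢 (n + 1)] (ξ n) := fun n =>
    (hX (n + 1)).sub ((hX n).mono (𝒢.mono (Nat.le_succ n)) le_rfl)
  have hξ0 : ∀ n, Measurable (ξ n) := fun n => (hξ n).mono (𝒢.le _) le_rfl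
  -- initial weight
  let W : Ω → ℝ≥0∞ := fun ω => (1 + ‖X 0 ω‖ₑ ^ 2 + K ω)⁻¹
  have hWm : Measurable[𝒢 0] W :=
    ((measurable_const.add (meas_enorm_sq _ (hX 0))).add hK).inv
  have hWt : ∀ ω, 1 + ‖X 0 ω‖ₑ ^ 2 + K ω ≠ ∞ := fun ω => by
    simp [hKt ω]
  have hW10 : ∀ ω, (1 : ℝ≥0∞) ≤ 1 + ‖X 0 ω‖ₑ ^ 2 + K ω := fun ω =>
    le_self_add.trans le_self_add
  have hW0 : ∀ ω, W ω ≠ 0 := fun ω => ENNReal.inv_ne_zero.2 (hWt ω)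
  have hW1 : ∀ ω, W ω ≤ 1 := fun ω => ENNReal.inv_le_one.2 (hW10 ω)
  let c : ℝ≥0∞ := (∫⁻ ω, W ω ∂μ)⁻¹
  have hI0 : ∫⁻ ω, W ω ∂μ ≠ 0 := by
    intro h
    rw [lintegral_eq_zero_iff (hWm.mono (𝒢.le 0) le_rfl)] at h
    obtain ⟨ω, hω⟩ := h.exists
    exact hW0 ω hω
  have hIt : ∫⁻ ω, W ω ∂μ ≠ ∞ := by
    refine ne_top_of_le_ne_top (b := ∫⁻ ω, 1 ∂μ) (by simp) (lintegral_mono hW1)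
  have hc0 : c ≠ 0 := ENNReal.inv_ne_zero.2 hIt
  have hct : c ≠ ∞ := ENNReal.inv_ne_top.2 hI0
  -- density process
  let Z : ℕ → Ω → ℝ≥0∞ := fun n ω => c * W ω * ∏ k ∈ Finset.range n, z k ω (ξ k ω)
  have hZ0 : ∀ ω, Z 0 ω = c * W ω := fun ω => by simp [Z]
  have hZs : ∀ n ω, Z (n + 1) ω = Z n ω * z n ω (ξ n ω) := fun n ω => by
    simp [Z, Finset.prod_range_succ, mul_assoc]
  have hZne : ∀ n ω, Z n ω ≠ 0 := fun n ω =>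
    mul_ne_zero (mul_ne_zero hc0 (hW0 ω)) (Finset.prod_ne_zero_iff.2 fun k _ => hz0 _ _ _)
  have hZt : ∀ n ω, Z n ω ≠ ∞ := fun n ω =>
    ENNReal.mul_ne_top (ENNReal.mul_ne_top hct (ne_top_of_le_ne_top (by simp) (hW1 ω)))
      (ENNReal.prod_ne_top fun k _ => hzt _ _ _)
  have hZm : ∀ n, Measurable[𝒢 n] (Z n) := by
    intro n
    induction n with
    | zero =>
      have : Z 0 = fun ω => c * W ω := funext hZ0
      rw [this]
      exact hWm.const_mul c
    | succ n ih =>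
      have : Z (n + 1) = fun ω => Z n ω * z n ω (ξ n ω) := funext (hZs n)
      rw [this]
      exact (ih.mono (𝒢.mono (Nat.le_succ n)) le_rfl).mul
        (meas_comp (𝒢.mono (Nat.le_succ n)) (z n) (hz n) (ξ n) (hξ n))
  have hZm0 : ∀ n, Measurable (Z n) := fun n => (hZm n).mono (𝒢.le n) le_rfl
  -- one step
  have hstep : ∀ (n : ℕ) (H : Ω → ℝ≥0∞), Measurable[𝒢 n] H → ∀ g : (Fin d → ℝ) → ℝ≥0∞,
      Measurable g → ∫⁻ ω, H ω * Z (n + 1) ω * g (ξ n ω) ∂μ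
        = ∫⁻ ω, H ω * Z n ω * ∫⁻ x, z n ω x * g x ∂(ν n ω) ∂μ := by
    intro n H hH g hg
    have h := hd n (fun ω x => (H ω * Z n ω) * (z n ω x * g x))
      (meas_prod _ (hH.mul (hZm n)) (z n) (hz n) g hg)
    have e1 : ∀ ω, H ω * Z (n + 1) ω * g (ξ n ω)
        = (H ω * Z n ω) * (z n ω (ξ n ω) * g (ξ n ω)) := by
      intro ω; rw [hZs]; ring
    simp only [e1]
    refine h.trans (lintegral_congr fun ω => ?_)
    have hm : Measurable (fun x => z n ω x * g x) := (meas_section (z n) (hz n) ω).mul hg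
    exact lintegral_const_mul _ hm
  have hstep1 : ∀ (n : ℕ) (H : Ω → ℝ≥0∞), Measurable[𝒢 n] H →
      ∫⁻ ω, H ω * Z (n + 1) ω ∂μ = ∫⁻ ω, H ω * Z n ω ∂μ := by
    intro n H hH
    have h := hstep n H hH (fun _ => 1) measurable_const
    simp only [mul_one] at h
    rw [h]
    apply lintegral_congr_ae
    filter_upwards [hz1 n] with ω hω
    rw [hω, mul_one]
  have hstepk : ∀ (n : ℕ) (H : Ω → ℝ≥0∞), Measurable[𝒢 n] H → ∀ k,
      ∫⁻ ω, H ω * Z (n + k) ω ∂μ = ∫⁻ ω, H ω * Z n ω ∂μ := by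
    intro n H hH k
    induction k with
    | zero => rfl
    | succ k ih =>
      rw [← ih, ← add_assoc]
      exact hstep1 (n + k) H (hH.mono (𝒢.mono (Nat.le_add_right n k)) le_rfl)
  have hZ1 : ∀ n, ∫⁻ ω, Z n ω ∂μ = 1 := by
    intro n
    have h := hstepk 0 (fun _ => 1) measurable_const n
    simp only [one_mul, zero_add] at h
    rw [h]
    simp only [hZ0]
    rw [lintegral_const_mul _ (hWm.mono (𝒢.le 0) le_rfl)]
    exact ENNReal.inv_mul_cancel hI0 hIt
  have hind : Measurable (({0}ᶜ : Set (Fin d → ℝ)).indicator (1 : (Fin d → ℝ) → ℝ≥0∞)) :=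
    measurable_one.indicator (measurableSet_singleton 0).compl
  have hsmall : ∀ n, ∫⁻ ω, Z (n + 2) ω * (({0}ᶜ : Set (Fin d → ℝ)).indicator 1 (ξ (n + 1) ω)
      + ‖ξ (n + 1) ω‖ₑ ^ 2) ∂μ ≤ ((4 : ℝ≥0∞)⁻¹) ^ n := by
    intro n
    have h := hstep (n + 1) (fun _ => 1) measurable_const
      (fun x => ({0}ᶜ : Set (Fin d → ℝ)).indicator 1 x + ‖x‖ₑ ^ 2) (hind.add (by fun_prop))
    simp only [one_mul] at h
    refine (le_of_eq h).trans ?_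
    calc _ ≤ ∫⁻ ω, Z (n + 1) ω * ((4 : ℝ≥0∞)⁻¹) ^ n ∂μ := by
          apply lintegral_mono_ae
          filter_upwards [hzs n] with ω hω
          gcongr
      _ = _ := by rw [lintegral_mul_const _ (hZm0 _), hZ1, one_mul]
  -- limit density
  let Y : Ω → ℝ≥0∞ := fun ω => limsup (fun n => Z n ω) atTop
  have hYm : Measurable Y := Measurable.limsup hZm0
  have hYe : ∀ᵐ ω ∂μ, ∀ n, ξ n ω = 0 → Y ω = Z (n + 1) ω := by
    filter_upwards [h_incr] with ω hω n hn
    have hall : ∀ k, ξ (n + k) ω = 0 := by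
      intro k
      induction k with
      | zero => exact hn
      | succ k ih => exact hω.1 (n + k) ih
    have hZc : ∀ k, Z (n + 1 + k) ω = Z (n + 1) ω := by
      intro k
      induction k with
      | zero => rfl
      | succ k ih =>
        rw [← add_assoc, hZs, ih]
        have : n + 1 + k = n + k + 1 := by ring
        rw [this, hfreeze (n + k) ω _ (hall k), mul_one]
    have ht : Tendsto (fun k => Z k ω) atTop (𝓝 (Z (n + 1) ω)) := by
      apply tendsto_const_nhds.congr'
      filter_upwards [eventually_ge_atTop (n + 1)] with k hk
      obtain ⟨j, rfl⟩ := Nat.exists_eq_add_of_le hk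
      exact (hZc j).symm
    exact ht.limsup_eq
  have hYA : ∀ m A, MeasurableSet[𝒢 m] A → ∫⁻ ω in A, Y ω ∂μ = ∫⁻ ω in A, Z m ω ∂μ := by
    intro m A hA
    have hA0 := 𝒢.le m _ hA
    let S : ℕ → Set Ω := fun n => {ω | ξ n ω = 0}
    have hS : ∀ n, MeasurableSet (S n) := fun n => hξ0 n (measurableSet_singleton 0)
    have hkey : ∀ n, ∫⁻ ω in A, (S n).indicator Y ω ∂μ
        = ∫⁻ ω in A, (S n).indicator (Z (n + 1)) ω ∂μ := by
      intro n
      apply setLIntegral_congr_fun_ae hA0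
      filter_upwards [hYe] with ω hω _
      by_cases h : ω ∈ S n
      · rw [indicator_of_mem h, indicator_of_mem h, hω n h]
      · rw [indicator_of_notMem h, indicator_of_notMem h]
    have hlim : Tendsto (fun n => ∫⁻ ω in A, (S n).indicator Y ω ∂μ) atTop
        (𝓝 (∫⁻ ω in A, Y ω ∂μ)) := by
      apply lintegral_tendsto_of_tendsto_of_monotone
      · exact fun n => (hYm.indicator (hS n)).aemeasurable
      · apply ae_restrict_of_ae
        filter_upwards [h_incr] with ω hω
        apply monotone_nat_of_le_succ
        intro n
        by_cases h : ω ∈ S n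
        · have h' : ω ∈ S (n + 1) := hω.1 n h
          rw [indicator_of_mem h, indicator_of_mem h']
        · rw [indicator_of_notMem h]; exact bot_le
      · apply ae_restrict_of_ae
        filter_upwards [h_incr] with ω hω
        obtain ⟨N, hN⟩ := hω.2
        apply tendsto_const_nhds.congr'
        filter_upwards [eventually_ge_atTop N] with k hk
        have : ω ∈ S k := by
          induction k, hk using Nat.le_induction with
          | base => exact hN
          | succ k _ ih => exact hω.1 k ih
        rw [indicator_of_mem this]
    have hZA : ∀ k, ∫⁻ ω in A, Z (m + k) ω ∂μ = ∫⁻ ω in A, Z m ω ∂μ := by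
      intro k
      have h := hstepk m (A.indicator fun _ => 1) (measurable_const.indicator hA) k
      have e : ∀ n, ∫⁻ ω, A.indicator (fun _ => 1) ω * Z n ω ∂μ = ∫⁻ ω in A, Z n ω ∂μ := by
        intro n
        rw [← lintegral_indicator hA0]
        apply lintegral_congr
        intro ω
        by_cases hω : ω ∈ A <;> simp [hω]
      rwa [e, e] at h
    have hup : ∀ n, ∫⁻ ω in A, (S (n + m + 1)).indicator Y ω ∂μ ≤ ∫⁻ ω in A, Z m ω ∂μ := by
      intro n
      rw [hkey, ← hZA (n + 2)]
      have : n + m + 1 + 1 = m + (n + 2) := by ring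
      rw [this]
      exact lintegral_mono fun ω => indicator_le_self _ _ _
    have hlow : ∀ n, ∫⁻ ω in A, Z m ω ∂μ
        ≤ ∫⁻ ω in A, (S (n + m + 1)).indicator Y ω ∂μ + ((4 : ℝ≥0∞)⁻¹) ^ (n + m) := by
      intro n
      rw [hkey, ← hZA (n + 2)]
      have e : n + m + 1 + 1 = m + (n + 2) := by ring
      have e2 : m + (n + 2) = n + m + 2 := by ring
      rw [e]
      have hs := hsmall (n + m)
      rw [← e2] at hs
      refine le_trans ?_ (add_le_add le_rfl ((setLIntegral_le_lintegral A _).trans hs))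
      rw [← lintegral_add_left ((hZm0 _).indicator (hS _))]
      apply lintegral_mono
      intro ω
      dsimp only
      by_cases h : ω ∈ S (n + m + 1)
      · rw [indicator_of_mem h]
        exact le_self_add
      · rw [indicator_of_notMem h, zero_add]
        have h' : ξ (n + m + 1) ω ∈ ({0}ᶜ : Set (Fin d → ℝ)) := h
        rw [indicator_of_mem h']
        calc Z (m + (n + 2)) ω = Z (m + (n + 2)) ω * 1 := (mul_one _).symm
          _ ≤ _ := by gcongr; exact le_self_add
    have hlim' : Tendsto (fun n => ∫⁻ ω in A, (S (n + m + 1)).indicator Y ω ∂μ) atTop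
        (𝓝 (∫⁻ ω in A, Y ω ∂μ)) := by
      have := hlim.comp (tendsto_add_atTop_nat (m + 1))
      exact this
    apply le_antisymm
    · exact le_of_tendsto' hlim' hup
    · have hpow : Tendsto (fun n => ((4 : ℝ≥0∞)⁻¹) ^ (n + m)) atTop (𝓝 0) :=
        (ENNReal.tendsto_pow_atTop_nhds_zero_of_lt_one
          (ENNReal.inv_lt_one.2 (by norm_num))).comp (tendsto_add_atTop_nat m)
      have := hlim'.add hpow
      rw [add_zero] at this
      exact ge_of_tendsto' this hlow
  -- the measure
  let Q : Measure Ω := μ.withDensity Y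
  have hQH : ∀ m (H : Ω → ℝ≥0∞), Measurable[𝒢 m] H →
      ∫⁻ ω, H ω ∂Q = ∫⁻ ω, H ω * Z m ω ∂μ := by
    intro m H hH
    have htr : Q.trim (𝒢.le m) = (μ.withDensity (Z m)).trim (𝒢.le m) := by
      refine @Measure.ext _ (𝒢 m) _ _ fun A hA => ?_
      rw [trim_measurableSet_eq _ hA, trim_measurableSet_eq _ hA,
        withDensity_apply _ (𝒢.le m _ hA), withDensity_apply _ (𝒢.le m _ hA), hYA m A hA]
    rw [← lintegral_trim (𝒢.le m) hH, htr, lintegral_trim (𝒢.le m) hH,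
      lintegral_withDensity_eq_lintegral_mul _ (hZm0 m) (hH.mono (𝒢.le m) le_rfl)]
    exact lintegral_congr fun ω => mul_comm _ _
  refine ⟨Q, ⟨?_⟩, withDensity_absolutelyContinuous _ _, ?_, ?_, ?_, ?_, ?_⟩
  · have := hQH 0 (fun _ => 1) measurable_const
    simp only [one_mul, hZ1, lintegral_const] at this
    exact this
  · apply withDensity_absolutelyContinuous' hYm.aemeasurable
    filter_upwards [hYe, h_incr] with ω hω h
    obtain ⟨n, hn⟩ := h.2
    rw [hω n hn]
    exact hZne _ _
  · rw [hQH 0 _ (meas_enorm_sq _ (hX 0))]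
    refine ne_top_of_le_ne_top (b := ∫⁻ ω, c ∂μ) (by simp [hct]) (lintegral_mono fun ω => ?_)
    dsimp only
    rw [hZ0, mul_left_comm]
    calc c * (‖X 0 ω‖ₑ ^ 2 * W ω) ≤ c * 1 := by
          gcongr
          apply ENNReal.div_le_of_le_mul
          rw [one_mul]
          exact le_add_self.trans le_self_add
      _ = c := mul_one c
  · have h1 := hQH 1 (fun ω => ‖ξ 0 ω‖ₑ ^ 2) (meas_enorm_sq _ (hξ 0))
    have h2 := hstep 0 (fun _ => 1) measurable_const (fun x => ‖x‖ₑ ^ 2) (by fun_prop)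
    simp only [one_mul, zero_add] at h2
    have h3 : ∫⁻ ω, ‖ξ 0 ω‖ₑ ^ 2 ∂Q = ∫⁻ ω, Z 0 ω * ∫⁻ x, z 0 ω x * ‖x‖ₑ ^ 2 ∂(ν 0 ω) ∂μ := by
      rw [h1, ← h2]
      exact lintegral_congr fun ω => mul_comm _ _
    change ∫⁻ ω, ‖ξ 0 ω‖ₑ ^ 2 ∂Q ≠ ∞
    rw [h3]
    refine ne_top_of_le_ne_top (b := ∫⁻ ω, c ∂μ) (by simp [hct]) (lintegral_mono_ae ?_)
    filter_upwards [hK0] with ω hω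
    rw [hZ0, mul_assoc]
    calc c * (W ω * _) ≤ c * (W ω * K ω) := by gcongr
      _ ≤ c * 1 := by
          gcongr
          rw [mul_comm]
          apply ENNReal.div_le_of_le_mul
          rw [one_mul]
          exact le_add_self
      _ = c := mul_one c
  · intro n
    have h1 := hQH (n + 2) (fun ω => ‖ξ (n + 1) ω‖ₑ ^ 2) (meas_enorm_sq _ (hξ (n + 1)))
    refine (le_of_eq h1).trans (le_trans (lintegral_mono fun ω => ?_) (hsmall n))
    dsimp only
    rw [mul_comm]
    gcongr
    exact le_add_self
  · intro n i A hA
    have hA0 := 𝒢.le n _ hA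
    have hA1 := 𝒢.mono (Nat.le_succ n) _ hA
    have hgen : ∀ g : (Fin d → ℝ) → ℝ≥0∞, Measurable g → ∫⁻ ω in A, g (ξ n ω) ∂Q
        = ∫⁻ ω, A.indicator (fun _ => 1) ω * Z n ω * ∫⁻ x, z n ω x * g x ∂(ν n ω) ∂μ := by
      intro g hg
      rw [← hstep n _ (measurable_const.indicator hA) g hg, ← lintegral_indicator hA0,
        hQH (n + 1) (A.indicator fun ω => g (ξ n ω)) ((hg.comp (hξ n)).indicator hA1)]
      apply lintegral_congr
      intro ω
      by_cases hω : ω ∈ A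
      · simp [hω, mul_comm]
      · simp [hω]
    have ha := hgen (fun x => ENNReal.ofReal (x i)) (by fun_prop)
    have hb := hgen (fun x => ENNReal.ofReal (-x i)) (by fun_prop)
    refine ha.trans (Eq.trans ?_ hb.symm)
    apply lintegral_congr_ae
    filter_upwards [hzm n] with ω hω
    rw [hω i]


lemma mkKernel {Ω : Type*} {m : MeasurableSpace Ω} (ν : Ω → Measure (Fin d → ℝ))
    (hp : ∀ ω, IsProbabilityMeasure (ν ω))
    (hm : ∀ A : Set (Fin d → ℝ), MeasurableSet A → Measurable fun ω => ν ω A) :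
    ∃ κ : Kernel Ω (Fin d → ℝ), IsMarkovKernel κ ∧ ∀ ω, κ ω = ν ω :=
  ⟨⟨ν, Measure.measurable_of_measurable_coe _ hm⟩, ⟨hp⟩, fun _ => rfl⟩

lemma meas_lint {Ω : Type*} {m : MeasurableSpace Ω} (ν : Ω → Measure (Fin d → ℝ))
    (hp : ∀ ω, IsProbabilityMeasure (ν ω))
    (hm : ∀ A : Set (Fin d → ℝ), MeasurableSet A → Measurable fun ω => ν ω A)
    (f : Ω → (Fin d → ℝ) → ℝ≥0∞) (hf : Measurable (Function.uncurry f)) :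
    Measurable fun ω => ∫⁻ x, f ω x ∂(ν ω) := by
  obtain ⟨κ, hκ, h⟩ := mkKernel ν hp hm
  simp only [← h]
  exact hf.lintegral_kernel_prod_right

lemma exists_K {Ω : Type*} {m : MeasurableSpace Ω} (ν : Ω → Measure (Fin d → ℝ))
    (hp : ∀ ω, IsProbabilityMeasure (ν ω))
    (hm : ∀ A : Set (Fin d → ℝ), MeasurableSet A → Measurable fun ω => ν ω A)
    (f : Ω → (Fin d → ℝ) → ℝ≥0∞) (hf : Measurable (Function.uncurry f)) :
    ∃ K : Ω → ℝ≥0∞, Measurable K ∧ (∀ ω, K ω ≠ ∞) ∧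
      ∀ ω, ∫⁻ x, f ω x * ‖x‖ₑ ^ 2 ∂(ν ω) ≠ ∞ → ∫⁻ x, f ω x * ‖x‖ₑ ^ 2 ∂(ν ω) ≤ K ω := by
  have h1 : Measurable fun ω => ∫⁻ x, f ω x * ‖x‖ₑ ^ 2 ∂(ν ω) := by
    apply meas_lint ν hp hm (fun ω x => f ω x * ‖x‖ₑ ^ 2)
    exact hf.mul (by fun_prop)
  classical
  refine ⟨fun ω => if ∫⁻ x, f ω x * ‖x‖ₑ ^ 2 ∂(ν ω) = ∞ then 0
    else ∫⁻ x, f ω x * ‖x‖ₑ ^ 2 ∂(ν ω), ?_, ?_, ?_⟩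
  · exact Measurable.ite (h1 (measurableSet_singleton _)) measurable_const h1
  · intro ω
    dsimp only
    split_ifs with h
    · simp
    · exact h
  · intro ω h
    dsimp only
    rw [if_neg h]

lemma exists_z0 {Ω : Type*} {m : MeasurableSpace Ω} (ν : Ω → Measure (Fin d → ℝ))
    (hp : ∀ ω, IsProbabilityMeasure (ν ω))
    (hm : ∀ A : Set (Fin d → ℝ), MeasurableSet A → Measurable fun ω => ν ω A) :
    ∃ z : Ω → (Fin d → ℝ) → ℝ≥0∞, Measurable (Function.uncurry z) ∧
      (∀ ω x, z ω x ≠ 0) ∧ (∀ ω x, z ω x ≠ ∞) ∧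
      ∀ ω, 0 ∈ intrinsicInterior ℝ (convexHull ℝ (msupport (ν ω))) → Good (ν ω) (z ω) := by
  obtain ⟨κ, hκ, h⟩ := mkKernel ν hp hm
  simp only [← h]
  exact exists_good κ

lemma exists_zs {Ω : Type*} {m : MeasurableSpace Ω} (ν : Ω → Measure (Fin d → ℝ))
    (hp : ∀ ω, IsProbabilityMeasure (ν ω))
    (hm : ∀ A : Set (Fin d → ℝ), MeasurableSet A → Measurable fun ω => ν ω A)
    (ζ : Ω → (Fin d → ℝ)) (hζ : Measurable ζ) (ε : ℝ≥0∞) (hε : ε ≠ 0) (hε1 : ε ≤ 1) :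
    ∃ z : Ω → (Fin d → ℝ) → ℝ≥0∞, Measurable (Function.uncurry z) ∧
      (∀ ω x, z ω x ≠ 0) ∧ (∀ ω x, z ω x ≠ ∞) ∧ (∀ ω x, ζ ω = 0 → z ω x = 1) ∧
      ∀ ω, 0 ∈ intrinsicInterior ℝ (convexHull ℝ (msupport (ν ω))) →
        (ζ ω = 0 → ν ω {0}ᶜ = 0) → (ζ ω ≠ 0 → ν ω {0} ≠ 0) → Good (ν ω) (z ω) ∧
        ∫⁻ x, z ω x * (({0}ᶜ : Set (Fin d → ℝ)).indicator 1 x + ‖x‖ₑ ^ 2) ∂(ν ω) ≤ ε := by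
  obtain ⟨κ, hκ, h⟩ := mkKernel ν hp hm
  simp only [← h]
  obtain ⟨z, hz, hz0, hzt, hzg⟩ := exists_good_small κ ε hε hε1
  classical
  refine ⟨fun ω x => if ζ ω = 0 then 1 else z ω x, ?_, ?_, ?_, ?_, ?_⟩
  · exact Measurable.ite ((hζ.comp measurable_fst) (measurableSet_singleton 0))
      measurable_const hz
  · intro ω x
    dsimp only
    split_ifs
    · simp
    · exact hz0 ω x
  · intro ω x
    dsimp only
    split_ifs
    · simp
    · exact hzt ω x
  · intro ω x h0
    simp [h0]
  · intro ω hri h1 h2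
    by_cases h0 : ζ ω = 0
    · have hae : ∀ᵐ x ∂(κ ω), x = 0 := by
        have := h1 h0
        rw [ae_iff]
        exact this
      simp only [h0, if_true, Good, one_mul]
      have hz' : ∀ g : (Fin d → ℝ) → ℝ≥0∞, g 0 = 0 → ∫⁻ x, g x ∂(κ ω) = 0 := by
        intro g hg
        rw [lintegral_congr_ae (g := fun _ => 0)]
        · simp
        · filter_upwards [hae] with x hx
          rw [hx, hg]
      refine ⟨⟨by simp, fun i => ?_, ?_⟩, ?_⟩
      · rw [hz' _ (by simp), hz' _ (by simp)]
      · rw [hz' _ (by simp)]; simp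
      · rw [hz' _ (by simp)]; exact bot_le
    · simp only [h0, if_false]
      exact hzg ω hri (h2 h0)

lemma disint' {Ω : Type*} {m m0 : MeasurableSpace Ω} (hle : m ≤ m0) (μ : Measure Ω)
    [IsProbabilityMeasure μ] (ξ : Ω → Fin d → ℝ) (hξ : Measurable ξ)
    (ν : Ω → Measure (Fin d → ℝ))
    (hp : ∀ ω, IsProbabilityMeasure (ν ω))
    (hm : ∀ A : Set (Fin d → ℝ), MeasurableSet A → Measurable[m] fun ω => ν ω A)
    (hc : ∀ A : Set (Fin d → ℝ), MeasurableSet A → (fun ω => (ν ω A).toReal) =ᵐ[μ]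
      μ[Set.indicator {ω' | ξ ω' ∈ A} (fun _ => (1 : ℝ)) | m])
    (f : Ω → (Fin d → ℝ) → ℝ≥0∞)
    (hf : @Measurable _ _ (m.prod MeasurableSpace.pi) _ (Function.uncurry f)) :
    ∫⁻ ω, f ω (ξ ω) ∂μ = ∫⁻ ω, ∫⁻ x, f ω x ∂(ν ω) ∂μ := by
  obtain ⟨κ, hκ, h⟩ := @mkKernel d Ω m ν hp hm
  simp only [← h] at hc ⊢
  exact disint hle μ ξ hξ κ hc f hf

lemma meas_ind {Ω : Type*} {m : MeasurableSpace Ω} (ζ : Ω → Fin d → ℝ) (hζ : Measurable ζ) :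
    Measurable (Function.uncurry fun (ω : Ω) (x : Fin d → ℝ) =>
      ({0} : Set (Fin d → ℝ)).indicator (1 : (Fin d → ℝ) → ℝ≥0∞) (ζ ω) *
        ({0}ᶜ : Set (Fin d → ℝ)).indicator (1 : (Fin d → ℝ) → ℝ≥0∞) x) := by
  have h1 : Measurable (({0}ᶜ : Set (Fin d → ℝ)).indicator (1 : (Fin d → ℝ) → ℝ≥0∞)) :=
    measurable_one.indicator (measurableSet_singleton 0).compl
  have h2 : Measurable (({0} : Set (Fin d → ℝ)).indicator (1 : (Fin d → ℝ) → ℝ≥0∞)) :=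
    measurable_one.indicator (measurableSet_singleton 0)
  exact (h2.comp (hζ.comp measurable_fst)).mul (h1.comp measurable_snd)

lemma absorb {Ω : Type*} (m : MeasurableSpace Ω) {m0 : MeasurableSpace Ω} (hle : m ≤ m0)
    (μ : Measure Ω) [IsProbabilityMeasure μ] (ξ : Ω → Fin d → ℝ) (ζ : Ω → Fin d → ℝ)
    (hζ : Measurable[m] ζ)
    (ν : Ω → Measure (Fin d → ℝ))
    (hp : ∀ ω, IsProbabilityMeasure (ν ω))
    (hm : ∀ A : Set (Fin d → ℝ), MeasurableSet A → Measurable[m] fun ω => ν ω A)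
    (hd : ∀ (f : Ω → (Fin d → ℝ) → ℝ≥0∞),
      @Measurable _ _ (m.prod MeasurableSpace.pi) _ (Function.uncurry f) →
      ∫⁻ ω, f ω (ξ ω) ∂μ = ∫⁻ ω, ∫⁻ x, f ω x ∂(ν ω) ∂μ)
    (h : ∀ᵐ ω ∂μ, ζ ω = 0 → ξ ω = 0) :
    ∀ᵐ ω ∂μ, ζ ω = 0 → ν ω {0}ᶜ = 0 := by
  have h1 := hd _ (@meas_ind d Ω m ζ hζ)
  have h2 : ∫⁻ ω, ({0} : Set (Fin d → ℝ)).indicator (1 : (Fin d → ℝ) → ℝ≥0∞) (ζ ω) *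
        ({0}ᶜ : Set (Fin d → ℝ)).indicator (1 : (Fin d → ℝ) → ℝ≥0∞) (ξ ω) ∂μ = 0 := by
    rw [lintegral_congr_ae (g := fun _ => 0)]
    · simp
    · filter_upwards [h] with ω hω
      by_cases h0 : ζ ω = 0
      · simp [hω h0]
      · simp [h0]
  rw [h2] at h1
  have h3 := (lintegral_eq_zero_iff
    ((@meas_lint d Ω m ν hp hm _ (@meas_ind d Ω m ζ hζ)).mono hle le_rfl)).1 h1.symm
  filter_upwards [h3] with ω hω h0
  simp only [h0, mem_singleton_iff, indicator_of_mem, Pi.one_apply, one_mul, Pi.zero_apply] at hω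
  rwa [lintegral_indicator_one (measurableSet_singleton 0).compl] at hω

end EMM

/-- **Existence of an equivalent martingale measure** (Lemma 1 of Kabanov–Stricker, as used in
the paper). Let `(G_n)` be a filtration and `(X_n)` an adapted `d`-dimensional process with
increments `ξ_{n+1} := X_{n+1} − X_n`; let `ν (n+1)` be a regular conditional law of `ξ_{n+1}`
given `G_n`. If (i) a.s. `0` lies in the relative interior of the convex hull of the support of
the conditional law of each increment, (ii) the indicators `1_{{ξ_n = 0}}` increase to `1`
almost surely, and (iii) `P[ξ_{n+1} = 0 | G_n] > 0` a.s. on `{ξ_n ≠ 0}`, then there is a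
probability measure `Q ∼ P` such that `X` is a `Q`-martingale, bounded in `L²(Q)`. -/
theorem exists_equivalent_martingale_measure
    {Ω : Type*} [m0 : MeasurableSpace Ω] (μ : Measure Ω) [IsProbabilityMeasure μ]
    {d : ℕ} (hd : 1 ≤ d)
    (𝒢 : Filtration ℕ m0)
    (X : ℕ → Ω → Fin d → ℝ)
    (hX_adapted : Adapted 𝒢 X)
    -- `ν (n+1)` is a regular conditional law of `ξ_{n+1} = X_{n+1} − X_n` given `𝒢 n`
    (ν : ℕ → Ω → Measure (Fin d → ℝ))
    (hν_prob : ∀ n ω, IsProbabilityMeasure (ν n ω))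
    (hν_meas : ∀ n : ℕ, ∀ A : Set (Fin d → ℝ), MeasurableSet A →
      Measurable[𝒢 n] fun ω => ν (n + 1) ω A)
    (hν_cond : ∀ n : ℕ, ∀ A : Set (Fin d → ℝ), MeasurableSet A →
      (fun ω => (ν (n + 1) ω A).toReal) =ᵐ[μ]
        μ[Set.indicator {ω' | X (n + 1) ω' - X n ω' ∈ A} (fun _ => (1 : ℝ)) | 𝒢 n])
    -- (i): `0 ∈ ri conv supp L(ξ_{n+1} | 𝒢 n)` a.s.
    (h_ri : ∀ n : ℕ, ∀ᵐ ω ∂μ,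
      (0 : Fin d → ℝ) ∈ intrinsicInterior ℝ (convexHull ℝ (msupport (ν (n + 1) ω))))
    -- (ii): the indicators `1_{{ξ_n = 0}}` increase to `1` a.s.
    (h_incr : ∀ᵐ ω ∂μ,
      (∀ n : ℕ, X (n + 1) ω - X n ω = 0 → X (n + 2) ω - X (n + 1) ω = 0) ∧
      (∃ n : ℕ, X (n + 1) ω - X n ω = 0))
    -- (iii): `P[ξ_{n+2} = 0 | 𝒢 (n+1)] > 0` a.s. on `{ξ_{n+1} ≠ 0}`
    (h_zero : ∀ n : ℕ, ∀ᵐ ω ∂μ, X (n + 1) ω - X n ω ≠ 0 →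
      0 < (μ[Set.indicator {ω' | X (n + 2) ω' - X (n + 1) ω' = 0} (fun _ => (1 : ℝ)) |
            𝒢 (n + 1)]) ω) :
    ∃ Q : Measure Ω, IsProbabilityMeasure Q ∧ Q ≪ μ ∧ μ ≪ Q ∧
      Martingale X 𝒢 Q ∧ ∃ C : ℝ, ∀ n : ℕ, ∫ ω, ‖X n ω‖ ^ 2 ∂Q ≤ C := by
  let ν' : ℕ → Ω → Measure (Fin d → ℝ) := fun n => ν (n + 1)
  have hp : ∀ n ω, IsProbabilityMeasure (ν' n ω) := fun n => hν_prob (n + 1)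
  have hm : ∀ n, ∀ A : Set (Fin d → ℝ), MeasurableSet A → Measurable[𝒢 n] fun ω => ν' n ω A :=
    hν_meas
  have hξ : ∀ n, Measurable[𝒢 (n + 1)] (fun ω => X (n + 1) ω - X n ω) := fun n =>
    (hX_adapted (n + 1)).sub ((hX_adapted n).mono (𝒢.mono (Nat.le_succ n)) le_rfl)
  have hdis : ∀ (n : ℕ) (f : Ω → (Fin d → ℝ) → ENNReal),
      @Measurable _ _ ((𝒢 n).prod MeasurableSpace.pi) _ (Function.uncurry f) →
      ∫⁻ ω, f ω (X (n + 1) ω - X n ω) ∂μ = ∫⁻ ω, ∫⁻ x, f ω x ∂(ν' n ω) ∂μ := fun n f hf =>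
    EMM.disint' (𝒢.le n) μ (fun ω => X (n + 1) ω - X n ω) ((hξ n).mono (𝒢.le _) le_rfl)
      (ν' n) (hp n) (hm n) (hν_cond n) f hf
  obtain ⟨z0, hz0, hz00, hz0t, hz0g⟩ := @EMM.exists_z0 d Ω (𝒢 0) (ν' 0) (hp 0) (hm 0)
  have hpow0 : ∀ n : ℕ, ((4 : ENNReal)⁻¹) ^ n ≠ 0 := fun n =>
    pow_ne_zero _ (ENNReal.inv_ne_zero.2 (by norm_num))
  have hpow1 : ∀ n : ℕ, ((4 : ENNReal)⁻¹) ^ n ≤ 1 := fun n =>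
    pow_le_one₀ bot_le (ENNReal.inv_le_one.2 (by norm_num))
  choose zs hzs hzs0 hzst hzs1 hzsg using fun n : ℕ =>
    @EMM.exists_zs d Ω (𝒢 (n + 1)) (ν' (n + 1)) (hp (n + 1)) (hm (n + 1))
      (fun ω => X (n + 1) ω - X n ω) (hξ n) (((4 : ENNReal)⁻¹) ^ n) (hpow0 n) (hpow1 n)
  obtain ⟨K, hK, hKt, hK0⟩ := @EMM.exists_K d Ω (𝒢 0) (ν' 0) (hp 0) (hm 0) z0 hz0
  have hzero : ∀ n, ∀ᵐ ω ∂μ, X (n + 1) ω - X n ω = 0 → ν' (n + 1) ω {0}ᶜ = 0 := fun n =>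
    EMM.absorb (𝒢 (n + 1)) (𝒢.le _) μ (fun ω => X (n + 2) ω - X (n + 1) ω)
      (fun ω => X (n + 1) ω - X n ω) (hξ n) (ν' (n + 1)) (hp (n + 1)) (hm (n + 1))
      (hdis (n + 1)) (h_incr.mono fun ω h => h.1 n)
  have hpos : ∀ n, ∀ᵐ ω ∂μ, X (n + 1) ω - X n ω ≠ 0 → ν' (n + 1) ω {0} ≠ 0 := by
    intro n
    filter_upwards [h_zero n, hν_cond (n + 1) {0} (measurableSet_singleton 0)] with ω h1 h2 h3 h4
    have h5 := h1 h3
    have h6 : (ν (n + 1 + 1) ω {0}).toReal = 0 := by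
      have : ν (n + 1 + 1) ω {0} = 0 := h4
      rw [this]; rfl
    rw [h6] at h2
    exact absurd h5 (not_lt.2 (le_of_eq h2.symm))
  have hgs : ∀ n, ∀ᵐ ω ∂μ, EMM.Good (ν' (n + 1) ω) (zs n ω) ∧
      ∫⁻ x, zs n ω x * (({0}ᶜ : Set (Fin d → ℝ)).indicator 1 x + ‖x‖ₑ ^ 2) ∂(ν' (n + 1) ω)
        ≤ ((4 : ENNReal)⁻¹) ^ n := by
    intro n
    filter_upwards [hzero n, hpos n, h_ri (n + 1)] with ω h1 h2 h3
    exact hzsg n ω h3 h1 h2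
  have hg0 : ∀ᵐ ω ∂μ, EMM.Good (ν' 0 ω) (z0 ω) := by
    filter_upwards [h_ri 0] with ω h
    exact hz0g ω h
  let z : ℕ → Ω → (Fin d → ℝ) → ENNReal := fun n => Nat.casesOn n z0 zs
  have hg : ∀ n, ∀ᵐ ω ∂μ, EMM.Good (ν' n ω) (z n ω) := by
    intro n
    cases n with
    | zero => exact hg0
    | succ n => exact (hgs n).mono fun ω h => h.1
  obtain ⟨Q, hQ, h1, h2, h3, h4, h5, h6⟩ := EMM.density μ 𝒢 X hX_adapted ν' hdis z
    (fun n => by cases n with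
      | zero => exact hz0
      | succ n => exact hzs n)
    (fun n => by cases n with
      | zero => exact hz00
      | succ n => exact hzs0 n)
    (fun n => by cases n with
      | zero => exact hz0t
      | succ n => exact hzst n)
    (fun n => (hg n).mono fun ω h => h.1)
    (fun n => (hg n).mono fun ω h => h.2.1)
    (fun n => (hgs n).mono fun ω h => h.2)
    K hK hKt (hg0.mono fun ω h => hK0 ω h.2.2)
    (fun n => hzs1 n) h_incr
  exact ⟨Q, hQ, h1, h2, EMM.finish Q 𝒢 X hX_adapted h3 h4 h5 h6⟩
end
end

section
/- Stickiness is preserved under composition with a continuous function: if the continuous, adapted, (0,∞)^d-valued process S is sticky and g : (0,∞)^d → (0,∞)^{d'} is a continuous function, then the process (g(S_t))_{t∈[0,T]} is sticky. -/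
open MeasureTheory Set Filter ProbabilityTheory

noncomputable section

/-- `Sstar T S τ ω = sup_{u ∈ [τ(ω), T]} ‖S_u(ω) - S_{τ(ω)}(ω)‖`, where the norm on
`Fin k → ℝ` is the sup norm `‖x‖ = max_i |x i|`. -/
def Sstar {Ω : Type*} {k : ℕ} (T : ℝ) (S : ℝ → Ω → Fin k → ℝ) (τ : Ω → ℝ) (ω : Ω) : ℝ :=
  ⨆ u : Set.Icc (τ ω) T, ‖S (u : ℝ) ω - S (τ ω) ω‖

/-- A `k`-dimensional process `Y` is sticky: for every deterministic `t ∈ [0,T)` and every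
`δ > 0`, the conditional probability `P[Y*_t < δ | F_t]` is almost surely positive. -/
def Sticky {Ω : Type*} {k : ℕ} [m0 : MeasurableSpace Ω] (μ : Measure Ω) (T : ℝ)
    (ℱ : Filtration ℝ m0) (Y : ℝ → Ω → Fin k → ℝ) : Prop :=
  ∀ t ∈ Set.Ico (0 : ℝ) T, ∀ δ > (0 : ℝ),
    ∀ᵐ ω ∂μ,
      0 < (μ[Set.indicator {ω' | Sstar T Y (fun _ => t) ω' < δ} (fun _ => (1 : ℝ)) | ℱ t]) ω


/-- The running supremum is bounded above by continuity of the path. -/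
lemma bdd_of_path {k : ℕ} {T t : ℝ} (y : ℝ → Fin k → ℝ) (hc : ContinuousOn y (Icc t T)) :
    BddAbove (range fun u : Icc t T => ‖y u - y t‖) := by
  have h1 : Continuous fun u : Icc t T => ‖y u - y t‖ :=
    ((continuousOn_iff_continuous_domRestrict.1 hc).sub continuous_const).norm
  exact isCompact_univ.bddAbove_image h1.continuousOn |>.mono (by rw [image_univ])

lemma measurable_Sstar {Ω : Type*} [MeasurableSpace Ω] {k : ℕ} {T t : ℝ} (htT : t ≤ T)
    (Y : ℝ → Ω → Fin k → ℝ) (hm : ∀ u ∈ Icc t T, Measurable (Y u))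
    (hc : ∀ ω, ContinuousOn (fun u => Y u ω) (Icc t T)) :
    Measurable (Sstar T Y (fun _ => t)) := by
  have : Nonempty (Icc t T) := ⟨⟨t, le_refl t, htT⟩⟩
  refine measurable_of_Iic fun c => ?_
  have : Sstar T Y (fun _ => t) ⁻¹' Iic c
      = ⋂ n : ℕ, {ω | ‖Y (TopologicalSpace.denseSeq (Icc t T) n) ω - Y t ω‖ ≤ c} := by
    ext ω
    have h1 : Continuous fun u : Icc t T => ‖Y u ω - Y t ω‖ :=
      ((continuousOn_iff_continuous_domRestrict.1 (hc ω)).sub continuous_const).norm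
    simp only [mem_preimage, mem_Iic, mem_iInter, mem_ofPred_eq]
    constructor
    · intro h n
      exact (le_ciSup (bdd_of_path (fun u => Y u ω) (hc ω)) (TopologicalSpace.denseSeq (Icc t T) n)).trans h
    · intro h
      refine ciSup_le fun u => ?_
      have hcl : IsClosed {u : Icc t T | ‖Y u ω - Y t ω‖ ≤ c} := isClosed_le h1 continuous_const
      have := hcl.closure_subset_iff.2 (range_subset_iff.2 h)
      exact this (TopologicalSpace.denseRange_denseSeq (Icc t T) u)
  rw [this]
  refine MeasurableSet.iInter fun n => ?_
  exact measurableSet_le (((hm _ (Subtype.mem _)).sub (hm t ⟨le_refl t, htT⟩)).norm) measurable_const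

/-- **Stickiness is preserved under composition with a continuous function.** -/
theorem sticky_comp_continuous
    {Ω : Type*} [m0 : MeasurableSpace Ω] (μ : Measure Ω) [IsProbabilityMeasure μ]
    (T : ℝ) (hT : 0 < T) (ℱ : Filtration ℝ m0)
    -- usual conditions: right-continuity and completeness, and `F_T = F`
    (hF_right : ∀ t : ℝ, (ℱ t : MeasurableSpace Ω) = ⨅ u ∈ Set.Ioi t, ℱ u)
    (hF_complete : ∀ s : Set Ω, μ s = 0 → MeasurableSet[ℱ 0] s)
    (hF_T : (ℱ T : MeasurableSpace Ω) = m0)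
    {d d' : ℕ} (hd : 1 ≤ d) (hd' : 1 ≤ d')
    (S : ℝ → Ω → Fin d → ℝ)
    (hS_adapted : Adapted ℱ S)
    (hS_cont : ∀ ω, Continuous fun t => S t ω)
    (hS_pos : ∀ t ∈ Set.Icc (0 : ℝ) T, ∀ ω, ∀ i, 0 < S t ω i)
    (hS_sticky : Sticky μ T ℱ S)
    (g : (Fin d → ℝ) → Fin d' → ℝ)
    (hg_cont : ContinuousOn g {x | ∀ i, 0 < x i})
    (hg_pos : ∀ x : Fin d → ℝ, (∀ i, 0 < x i) → ∀ j, 0 < g x j) :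
    Sticky μ T ℱ (fun t ω => g (S t ω)) := by
  intro t ht δ hδ
  set O : Set (Fin d → ℝ) := {x | ∀ i, 0 < x i} with hO
  have hOm : MeasurableSet O := by
    have : IsOpen O := by
      simp only [hO, ofPred_forall]
      exact isOpen_iInter_of_finite fun i => isOpen_lt continuous_const (continuous_apply i)
    exact this.measurableSet
  have hsub : ∀ u ∈ Icc t T, u ∈ Icc (0 : ℝ) T := fun u hu => ⟨ht.1.trans hu.1, hu.2⟩
  have hSO : ∀ u ∈ Icc t T, ∀ ω, S u ω ∈ O := fun u hu ω => hS_pos u (hsub u hu) ω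
  have htm : t ∈ Icc t T := ⟨le_refl t, ht.2.le⟩
  have : Nonempty (Icc t T) := ⟨⟨t, htm⟩⟩
  have hSmF : Measurable[ℱ t] (S t) := hS_adapted t
  have hSm : ∀ u, Measurable (S u) := fun u => ((hS_adapted u).mono (ℱ.le u) le_rfl)
  have hYm : ∀ u ∈ Icc t T, Measurable (fun ω => g (S u ω)) := by
    intro u hu
    have h1 : Measurable (O.domRestrict g) := (continuousOn_iff_continuous_domRestrict.1 hg_cont).measurable
    exact h1.comp ((hSm u).subtype_mk (h := fun ω => hSO u hu ω))
  have hYc : ∀ ω, ContinuousOn (fun u => g (S u ω)) (Icc t T) := fun ω =>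
    hg_cont.comp (hS_cont ω).continuousOn (fun u hu => hSO u hu ω)
  have hYs := measurable_Sstar ht.2.le (fun u ω => g (S u ω)) hYm hYc
  have hSs := measurable_Sstar ht.2.le S (fun u _ => hSm u) (fun ω => (hS_cont ω).continuousOn)
  let r : ℕ → ℝ := fun n => 1 / ((n : ℝ) + 1)
  have hr : ∀ n, 0 < r n := fun n => Nat.one_div_pos_of_nat
  let M : ℕ → Set (Fin d → ℝ) := fun n =>
    {x | x ∈ O ∧ ∀ y ∈ O, ‖y - x‖ < r n → ‖g y - g x‖ ≤ δ / 2}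
  have hMm : ∀ n, MeasurableSet (M n) := by
    intro n
    have : M n = closure (M n) ∩ O := by
      refine Subset.antisymm (fun x hx => ⟨subset_closure hx, hx.1⟩) ?_
      rintro x ⟨hx, hxO⟩
      refine ⟨hxO, fun y hy hyx => ?_⟩
      obtain ⟨s, hs, hsx⟩ := mem_closure_iff_seq_limit.1 hx
      have hlim : Tendsto (fun k => g (s k)) atTop (nhds (g x)) :=
        (hg_cont x hxO).tendsto.comp
          (tendsto_nhdsWithin_iff.2 ⟨hsx, Eventually.of_forall fun k => (hs k).1⟩)
      refine le_of_tendsto (tendsto_const_nhds.sub hlim).norm ?_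
      have h2 : Tendsto (fun k => ‖y - s k‖) atTop (nhds ‖y - x‖) :=
        (tendsto_const_nhds.sub hsx).norm
      filter_upwards [h2.eventually_lt_const hyx] with k hk
      exact (hs k).2 y hy hk
    rw [this]
    exact isClosed_closure.measurableSet.inter hOm
  have hMex : ∀ x ∈ O, ∃ n, x ∈ M n := by
    intro x hx
    obtain ⟨ε, hε, h⟩ := Metric.continuousOn_iff.1 hg_cont x hx (δ / 2) (half_pos hδ)
    obtain ⟨n, hn⟩ := exists_nat_one_div_lt hε
    refine ⟨n, hx, fun y hy hyx => ?_⟩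
    have := h y hy (by rw [dist_eq_norm]; exact hyx.trans hn)
    rw [dist_eq_norm] at this
    exact this.le
  set C : Set Ω := {ω' | Sstar T (fun t ω => g (S t ω)) (fun _ => t) ω' < δ} with hC
  let B : ℕ → Set Ω := fun n => {ω' | Sstar T S (fun _ => t) ω' < r n}
  have hCm : MeasurableSet C := measurableSet_lt hYs measurable_const
  have hBm : ∀ n, MeasurableSet (B n) := fun n => measurableSet_lt hSs measurable_const
  have hint : ∀ {A : Set Ω}, MeasurableSet A → Integrable (A.indicator fun _ => (1 : ℝ)) μ :=
    fun hA => (integrable_const 1).indicator hA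
  have key : ∀ n, ∀ ω, S t ω ∈ M n → ω ∈ B n → ω ∈ C := by
    intro n ω hM hB
    have : Sstar T (fun t ω => g (S t ω)) (fun _ => t) ω ≤ δ / 2 := by
      refine ciSup_le fun u => ?_
      refine hM.2 _ (hSO u u.2 ω) (lt_of_le_of_lt ?_ hB)
      exact le_ciSup (bdd_of_path (fun u => S u ω) (hS_cont ω).continuousOn) u
    exact this.trans_lt (half_lt_self hδ)
  have hpos : ∀ n, ∀ᵐ ω ∂μ, S t ω ∈ M n →
      0 < (μ[C.indicator (fun _ => (1 : ℝ)) | ℱ t]) ω := by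
    intro n
    have hA : MeasurableSet[ℱ t] (S t ⁻¹' M n) := hSmF (hMm n)
    have h1 := condExp_indicator (μ := μ) (hint (hBm n)) hA
    have h2 : μ[(S t ⁻¹' M n).indicator ((B n).indicator fun _ => (1 : ℝ)) | ℱ t] ≤ᵐ[μ]
        μ[C.indicator (fun _ => (1 : ℝ)) | ℱ t] := by
      refine condExp_mono ((hint (hBm n)).indicator (ℱ.le t _ hA)) (hint hCm) ?_
      refine Eventually.of_forall fun ω => ?_
      by_cases hM : ω ∈ S t ⁻¹' M n
      · by_cases hB : ω ∈ B n
        · simp [hM, hB, key n ω hM hB]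
        · simp only [indicator_of_mem hM, indicator_of_notMem hB]
          exact indicator_nonneg (fun _ _ => zero_le_one) _
      · simp only [indicator_of_notMem hM]
        exact indicator_nonneg (fun _ _ => zero_le_one) _
    filter_upwards [h1, h2, hS_sticky t ht (r n) (hr n)] with ω e1 e2 e3 hM
    rw [e1, indicator_of_mem (show ω ∈ S t ⁻¹' M n from hM)] at e2
    exact e3.trans_le e2
  filter_upwards [ae_all_iff.2 hpos] with ω h
  obtain ⟨n, hn⟩ := hMex _ (hSO t htm ω)
  exact h n hn
end
end

section
/- Let (B_t)_{t∈[0,T]} be a standard one-dimensional Brownian motion with respect to the filtration (F_t)_{t∈[0,T]}, and let s_0 > 0 be a constant. Then the one-dimensional process S_t := s_0 + ∫_0^t |B_s| ds, t ∈ [0,T], which has strictly increasing, continuously differentiable paths, is sticky: for every t ∈ [0,T) and every δ > 0, P[ sup_{u∈[t,T]} |S_u − S_t| < δ | F_t ] > 0 almost surely. -/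
open MeasureTheory Set Filter ProbabilityTheory
open scoped NNReal

noncomputable section

/-- The strictly increasing, continuously differentiable process
`S_t = s₀ + ∫_0^t |B_s| ds`. -/
def Sproc {Ω : Type*} (s₀ : ℝ) (B : ℝ → Ω → ℝ) (t : ℝ) (ω : Ω) : ℝ :=
  s₀ + ∫ s in (0 : ℝ)..t, |B s ω|

/-- Second moment of a centred Gaussian. -/
theorem stk_gauss_sq (v : ℝ≥0) :
    ∫⁻ x, ENNReal.ofReal (x ^ 2) ∂(gaussianReal 0 v) = v := by
  have h1 := ofReal_variance (X := (id : ℝ → ℝ)) (μ := gaussianReal 0 v)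
    (memLp_id_gaussianReal 2)
  rw [evariance_eq_lintegral_ofReal, variance_id_gaussianReal] at h1
  simp only [id, integral_id_gaussianReal, sub_zero] at h1
  rw [← h1]
  simp

/-- Gaussian scaling. -/
theorem stk_gauss_scale (r : ℝ) (hr : 0 < r) (a b : ℝ) :
    gaussianReal 0 (Real.toNNReal (r ^ 2)) (Icc (r * a) (r * b))
      = gaussianReal 0 1 (Icc a b) := by
  have h := gaussianReal_map_const_mul (μ := 0) (v := 1) r
  have e : (Real.toNNReal (r ^ 2)) = (.mk (r ^ 2) (sq_nonneg _) * 1 : ℝ≥0) := by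
    ext
    simp [Real.coe_toNNReal _ (sq_nonneg r)]
  rw [mul_zero] at h
  rw [e, ← h, Measure.map_apply (by fun_prop) measurableSet_Icc]
  congr 1
  ext x
  simp only [mem_preimage, mem_Icc]
  rw [mul_le_mul_iff_right₀ hr, mul_le_mul_iff_right₀ hr]

theorem stk_gauss_pos (a b : ℝ) (hab : a < b) : 0 < gaussianReal 0 1 (Icc a b) := by
  rw [pos_iff_ne_zero]
  intro h
  have := gaussianReal_absolutelyContinuous' 0 (v := 1) one_ne_zero h
  simp at this
  linarith

/-- Running quadratic functional is measurable. -/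
theorem stk_meas {Ω : Type*} [m0 : MeasurableSpace Ω] (ℱ : Filtration ℝ m0)
    (B : ℝ → Ω → ℝ) (hB_adapted : Adapted ℱ B)
    (hB_cont : ∀ ω, Continuous fun t => B t ω) (s v : ℝ) (hsv : s ≤ v) :
    Measurable[ℱ v] (fun ω => ∫⁻ u in Ioc s v, ENNReal.ofReal ((B u ω - B s ω) ^ 2)) := by
  have e : (fun ω => ∫⁻ u in Ioc s v, ENNReal.ofReal ((B u ω - B s ω) ^ 2))
      = (fun ω => ∫⁻ u in Ioc s v, ENNReal.ofReal ((B (min u v) ω - B s ω) ^ 2)) := by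
    funext ω
    refine setLIntegral_congr_fun measurableSet_Ioc ?_
    intro u hu
    simp only [min_eq_left hu.2]
  rw [e]
  have h1 : @Measurable (ℝ × Ω) ℝ (@Prod.instMeasurableSpace _ _ _ (ℱ v)) _
      (Function.uncurry fun u ω => B (min u v) ω - B s ω) := by
    refine @measurable_uncurry_of_continuous_of_measurable Ω ℝ ℝ _ _ _ _ _ _ _ _ _ (ℱ v) _ ?_ ?_
    · intro ω
      have := hB_cont ω
      fun_prop
    · intro u
      exact (hB_adapted.measurable_le (min_le_right u v)).sub (hB_adapted.measurable_le hsv)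
  have h2 : @Measurable (ℝ × Ω) ENNReal (@Prod.instMeasurableSpace _ _ _ (ℱ v)) _
      (fun p => ENNReal.ofReal ((B (min p.1 v) p.2 - B s p.2) ^ 2)) :=
    ENNReal.measurable_ofReal.comp ((measurable_id.pow_const 2).comp h1)
  exact @Measurable.lintegral_prod_left' ℝ Ω _ (ℱ v) (volume.restrict (Ioc s v)) _ _ h2

theorem stk_second_moment {Ω : Type*} [m0 : MeasurableSpace Ω] (μ : Measure Ω)
    [IsProbabilityMeasure μ]
    (T : ℝ) (ℱ : Filtration ℝ m0) (B : ℝ → Ω → ℝ) (hB_adapted : Adapted ℱ B)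
    (hB_cont : ∀ ω, Continuous fun t => B t ω)
    (hB_indep : ∀ s t : ℝ, 0 ≤ s → s ≤ t → t ≤ T →
      Indep (MeasurableSpace.comap (fun ω => B t ω - B s ω) (inferInstance : MeasurableSpace ℝ))
        (ℱ s) μ)
    (hB_gauss : ∀ s t : ℝ, 0 ≤ s → s ≤ t → t ≤ T →
      μ.map (fun ω => B t ω - B s ω) = gaussianReal 0 (Real.toNNReal (t - s)))
    (s v : ℝ) (hs : 0 ≤ s) (hsv : s ≤ v) (hvT : v ≤ T) (A : Set Ω) (hA : MeasurableSet[ℱ s] A) :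
    ∫⁻ ω in A, (∫⁻ u in Ioc s v, ENNReal.ofReal ((B u ω - B s ω) ^ 2)) ∂μ
      ≤ μ A * ENNReal.ofReal ((v - s) ^ 2) := by
  have hm : ∀ u, Measurable (B u) := fun u => hB_adapted.measurable
  have hA' : MeasurableSet A := ℱ.le s _ hA
  have hj : Measurable (Function.uncurry fun u ω => B u ω - B s ω) := by
    refine measurable_uncurry_of_continuous_of_measurable ?_ ?_
    · intro ω
      have := hB_cont ω
      fun_prop
    · intro u
      exact (hm u).sub (hm s)
  have hj2 : Measurable (fun p : Ω × ℝ => ENNReal.ofReal ((B p.2 p.1 - B s p.1) ^ 2)) :=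
    ENNReal.measurable_ofReal.comp ((measurable_id.pow_const 2).comp (hj.comp measurable_swap))
  rw [lintegral_lintegral_swap hj2.aemeasurable]
  have key : ∀ u ∈ Ioc s v, ∫⁻ ω in A, ENNReal.ofReal ((B u ω - B s ω) ^ 2) ∂μ
      ≤ μ A * ENNReal.ofReal (v - s) := by
    intro u hu
    have hmeas : Measurable (fun ω => B u ω - B s ω) := (hm u).sub (hm s)
    have hI := lintegral_mul_eq_lintegral_mul_lintegral_of_independent_measurableSpace
      (μ := μ) (f := fun ω => ENNReal.ofReal ((B u ω - B s ω) ^ 2))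
      (g := A.indicator 1) hmeas.comap_le (ℱ.le s)
      (hB_indep s u hs hu.1.le (hu.2.trans hvT))
      ((ENNReal.measurable_ofReal.comp (measurable_id.pow_const 2)).comp (comap_measurable _))
      ((@measurable_const ENNReal Ω _ (ℱ s) 1).indicator hA)
    have e1 : ∫⁻ ω in A, ENNReal.ofReal ((B u ω - B s ω) ^ 2) ∂μ =
        ∫⁻ ω, ENNReal.ofReal ((B u ω - B s ω) ^ 2) * A.indicator 1 ω ∂μ := by
      rw [← lintegral_indicator hA']
      congr 1
      funext ω
      by_cases h : ω ∈ A <;> simp [h]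
    have e2 : ∫⁻ ω, ENNReal.ofReal ((B u ω - B s ω) ^ 2) ∂μ = ENNReal.ofReal (u - s) := by
      have := stk_gauss_sq (Real.toNNReal (u - s))
      rw [← hB_gauss s u hs hu.1.le (hu.2.trans hvT), lintegral_map (by fun_prop) hmeas] at this
      exact this
    rw [e1, hI, e2, lintegral_indicator_one hA', mul_comm]
    gcongr
    exact hu.2
  calc _ ≤ ∫⁻ u in Ioc s v, μ A * ENNReal.ofReal (v - s) :=
        setLIntegral_mono measurable_const key
    _ = _ := by
      rw [setLIntegral_const, Real.volume_Ioc, mul_assoc, ← ENNReal.ofReal_mul (by linarith), sq]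

/-- One step. -/
theorem stk_core {Ω : Type*} [m0 : MeasurableSpace Ω] (μ : Measure Ω)
    [IsProbabilityMeasure μ]
    (T : ℝ) (ℱ : Filtration ℝ m0) (B : ℝ → Ω → ℝ) (hB_adapted : Adapted ℱ B)
    (hB_cont : ∀ ω, Continuous fun t => B t ω)
    (hB_indep : ∀ s t : ℝ, 0 ≤ s → s ≤ t → t ≤ T →
      Indep (MeasurableSpace.comap (fun ω => B t ω - B s ω) (inferInstance : MeasurableSpace ℝ))
        (ℱ s) μ)
    (hB_gauss : ∀ s t : ℝ, 0 ≤ s → s ≤ t → t ≤ T →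
      μ.map (fun ω => B t ω - B s ω) = gaussianReal 0 (Real.toNNReal (t - s)))
    (s r : ℝ) (hs : 0 ≤ s) (hr : 0 < r) (hvT : s + r ^ 2 ≤ T) (A : Set Ω)
    (hA : MeasurableSet[ℱ s] A) (hA0 : μ A ≠ 0) (a b C : ℝ) (hC : 1 ≤ C)
    (hc : 1 < gaussianReal 0 1 (Icc a b) * ENNReal.ofReal C) :
    ∃ A' ⊆ A, MeasurableSet[ℱ (s + r ^ 2)] A' ∧ μ A' ≠ 0 ∧
      ∀ ω ∈ A', B (s + r ^ 2) ω - B s ω ∈ Icc (r * a) (r * b) ∧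
        ∫ u in s..(s + r ^ 2), |B u ω| ≤ r ^ 2 * |B s ω| + C * r ^ 3 := by
  have hr2 : 0 < r ^ 2 := by positivity
  have hsv : s ≤ s + r ^ 2 := by linarith
  have hm : ∀ u, Measurable (B u) := fun u => hB_adapted.measurable
  have hA' : MeasurableSet A := ℱ.le s _ hA
  set v := s + r ^ 2 with hv
  set f : Ω → ENNReal := fun ω => ∫⁻ u in Ioc s v, ENNReal.ofReal ((B u ω - B s ω) ^ 2) with hf
  have hfm : Measurable[ℱ v] f := stk_meas ℱ B hB_adapted hB_cont s v hsv
  have hfm0 : Measurable f := hfm.mono (ℱ.le v) le_rfl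
  set ε : ENNReal := ENNReal.ofReal (C * (r ^ 2) ^ 2) with hε
  set D : Set Ω := (fun ω => B v ω - B s ω) ⁻¹' Icc (r * a) (r * b) with hD
  have hDm : MeasurableSet[ℱ v] D :=
    ((hB_adapted v).sub (hB_adapted.measurable_le hsv)) measurableSet_Icc
  have hDm0 := ℱ.le v _ hDm
  have hmv : v - s = r ^ 2 := by rw [hv]; ring
  have hDμ : μ D = gaussianReal 0 1 (Icc a b) := by
    rw [← stk_gauss_scale r hr, ← hmv, ← hB_gauss s v hs hsv hvT,
      Measure.map_apply (f := fun ω => B v ω - B s ω) ((hm v).sub (hm s)) measurableSet_Icc]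
  have hind : μ (A ∩ D) = μ A * μ D := by
    have := (Indep_iff _ _ μ).1 (hB_indep s v hs hsv hvT) D A ⟨_, measurableSet_Icc, rfl⟩ hA
    rw [inter_comm, this, mul_comm]
  refine ⟨(A ∩ D) ∩ {ω | f ω < ε}, fun ω h => h.1.1, ?_, ?_, ?_⟩
  · exact ((ℱ.mono hsv _ hA).inter hDm).inter (measurableSet_lt hfm measurable_const)
  · intro h0
    have h1 : μ (A ∩ D) ≤ μ (A ∩ {ω | ε ≤ f ω}) := by
      calc μ (A ∩ D) ≤ μ ((A ∩ D ∩ {ω | f ω < ε}) ∪ (A ∩ {ω | ε ≤ f ω})) := by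
            apply measure_mono
            intro ω hω
            rcases lt_or_ge (f ω) ε with h | h
            · exact Or.inl ⟨hω, h⟩
            · exact Or.inr ⟨hω.1, h⟩
        _ ≤ _ := measure_union_le _ _
        _ = _ := by rw [h0, zero_add]
    have h2 := mul_meas_ge_le_lintegral (μ := μ.restrict A) hfm0 ε
    have h3 := stk_second_moment μ T ℱ B hB_adapted hB_cont hB_indep hB_gauss s v hs hsv hvT A hA
    rw [Measure.restrict_apply (measurableSet_le measurable_const hfm0), inter_comm] at h2
    have h4 : ε * (μ A * gaussianReal 0 1 (Icc a b)) ≤ μ A * ENNReal.ofReal ((r ^ 2) ^ 2) := by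
      rw [← hDμ, ← hind, ← hmv]
      exact (mul_le_mul_right h1 _).trans (h2.trans h3)
    rw [hε, ENNReal.ofReal_mul (by linarith)] at h4
    set k := μ A * ENNReal.ofReal ((r ^ 2) ^ 2) with hk
    have hk0 : k ≠ 0 := mul_ne_zero hA0 (by simp; positivity)
    have hkt : k ≠ ⊤ := ENNReal.mul_ne_top (measure_ne_top _ _) ENNReal.ofReal_ne_top
    have h5 : k * (gaussianReal 0 1 (Icc a b) * ENNReal.ofReal C) ≤ k * 1 := by
      rw [mul_one]
      refine le_trans (le_of_eq ?_) h4
      rw [hk]; ring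
    exact absurd hc (not_lt.2 ((ENNReal.mul_le_mul_iff_right hk0 hkt).1 h5))
  · rintro ω ⟨⟨_, hωD⟩, hωf⟩
    refine ⟨hωD, ?_⟩
    have hc0 := hB_cont ω
    have hY : ∫ u in s..v, (B u ω - B s ω) ^ 2 < C * (r ^ 2) ^ 2 := by
      have hfin : Continuous fun u => (B u ω - B s ω) ^ 2 := by fun_prop
      rw [intervalIntegral.integral_of_le hsv]
      have := ofReal_integral_eq_lintegral_ofReal (μ := volume.restrict (Ioc s v))
        (f := fun u => (B u ω - B s ω) ^ 2)
        ((hfin.integrableOn_Icc (a := s) (b := v)).mono_set Ioc_subset_Icc_self)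
        (ae_of_all _ fun u => sq_nonneg _)
      have h6 : f ω < ε := hωf
      rw [hf] at h6
      simp only at h6
      rw [← this, hε] at h6
      exact (ENNReal.ofReal_lt_ofReal_iff (by positivity)).1 h6
    have hb : ∫ u in s..v, |B u ω| ≤
        ∫ u in s..v, ((|B s ω| + r / 2) + (1 / (2 * r)) * (B u ω - B s ω) ^ 2) := by
      refine intervalIntegral.integral_mono_on hsv ?_ ?_ ?_
      · exact (by fun_prop : Continuous fun u => |B u ω|).intervalIntegrable _ _
      · exact (by fun_prop : Continuous fun u =>
          ((|B s ω| + r / 2) + (1 / (2 * r)) * (B u ω - B s ω) ^ 2)).intervalIntegrable _ _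
      · intro u _
        have h7 : |B u ω| ≤ |B s ω| + |B u ω - B s ω| := by
          calc |B u ω| = |B s ω + (B u ω - B s ω)| := by ring_nf
            _ ≤ _ := abs_add_le _ _
        have h8 : |B u ω - B s ω| ≤ r / 2 + (1 / (2 * r)) * (B u ω - B s ω) ^ 2 := by
          rw [← sq_abs (B u ω - B s ω)]
          set x := |B u ω - B s ω|
          have : r / 2 + (1 / (2 * r)) * x ^ 2 - x = (1 / (2 * r)) * (x - r) ^ 2 := by
            field_simp; ring
          have : 0 ≤ (1 / (2 * r)) * (x - r) ^ 2 := by positivity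
          linarith
        linarith
    rw [intervalIntegral.integral_add (by simp)
      ((by fun_prop : Continuous fun u =>
          ((1 / (2 * r)) * (B u ω - B s ω) ^ 2)).intervalIntegrable _ _),
      intervalIntegral.integral_const, intervalIntegral.integral_const_mul, hmv,
      smul_eq_mul] at hb
    have h9 : (1 / (2 * r)) * (∫ u in s..v, (B u ω - B s ω) ^ 2) ≤ C * r ^ 3 / 2 := by
      calc _ ≤ (1 / (2 * r)) * (C * (r ^ 2) ^ 2) := by gcongr
        _ = _ := by field_simp
    have h10 : r ^ 3 ≤ C * r ^ 3 := by
      have : 0 < r ^ 3 := by positivity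
      nlinarith
    nlinarith

/-- One step towards zero, for both signs. -/
theorem stk_step {Ω : Type*} [m0 : MeasurableSpace Ω] (μ : Measure Ω)
    [IsProbabilityMeasure μ]
    (T : ℝ) (ℱ : Filtration ℝ m0) (B : ℝ → Ω → ℝ) (hB_adapted : Adapted ℱ B)
    (hB_cont : ∀ ω, Continuous fun t => B t ω)
    (hB_indep : ∀ s t : ℝ, 0 ≤ s → s ≤ t → t ≤ T →
      Indep (MeasurableSpace.comap (fun ω => B t ω - B s ω) (inferInstance : MeasurableSpace ℝ))
        (ℱ s) μ)
    (hB_gauss : ∀ s t : ℝ, 0 ≤ s → s ≤ t → t ≤ T →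
      μ.map (fun ω => B t ω - B s ω) = gaussianReal 0 (Real.toNNReal (t - s)))
    (C : ℝ) (hC : 1 ≤ C)
    (hc1 : 1 < gaussianReal 0 1 (Icc (-1) (-(1 / 2))) * ENNReal.ofReal C)
    (hc2 : 1 < gaussianReal 0 1 (Icc (1 / 2) 1) * ENNReal.ofReal C)
    (s r : ℝ) (hs : 0 ≤ s) (hr : 0 < r) (hvT : s + r ^ 2 ≤ T) (A : Set Ω)
    (hA : MeasurableSet[ℱ s] A) (hA0 : μ A ≠ 0) (R : ℝ) (hR : ∀ ω ∈ A, |B s ω| ≤ R) :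
    ∃ A' ⊆ A, MeasurableSet[ℱ (s + r ^ 2)] A' ∧ μ A' ≠ 0 ∧
      ∀ ω ∈ A', |B (s + r ^ 2) ω| ≤ max (R - r / 2) r ∧
        ∫ u in s..(s + r ^ 2), |B u ω| ≤ r ^ 2 * R + C * r ^ 3 := by
  have hr2 : 0 < r ^ 2 := by positivity
  set P : Set Ω := B s ⁻¹' Ici 0 with hP
  have hPm : MeasurableSet[ℱ s] P := (hB_adapted s) measurableSet_Ici
  by_cases h : μ (A ∩ P) = 0
  · have h' : μ (A \ P) ≠ 0 := by
      intro h''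
      apply hA0
      have := measure_union_le (μ := μ) (A ∩ P) (A \ P)
      rw [inter_union_sdiff, h, h'', zero_add] at this
      exact le_antisymm this (zero_le)
    obtain ⟨A', hsub, hm, h0, hω⟩ := stk_core μ T ℱ B hB_adapted hB_cont hB_indep hB_gauss s r hs
      hr hvT (A \ P) (hA.diff hPm) h' _ _ C hC hc2
    refine ⟨A', fun ω hh => (hsub hh).1, hm, h0, fun ω hh => ?_⟩
    obtain ⟨⟨h1, h2⟩, h3⟩ := hω ω hh
    have h4 := hR ω (hsub hh).1
    have h5 : B s ω < 0 := by simpa [hP] using (hsub hh).2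
    refine ⟨?_, h3.trans (by gcongr)⟩
    rw [abs_le] at h4 ⊢
    have := le_max_left (R - r / 2) r
    have := le_max_right (R - r / 2) r
    constructor <;> linarith [h4.1]
  · obtain ⟨A', hsub, hm, h0, hω⟩ := stk_core μ T ℱ B hB_adapted hB_cont hB_indep hB_gauss s r hs
      hr hvT (A ∩ P) (hA.inter hPm) h _ _ C hC hc1
    refine ⟨A', fun ω hh => (hsub hh).1, hm, h0, fun ω hh => ?_⟩
    obtain ⟨⟨h1, h2⟩, h3⟩ := hω ω hh
    have h4 := hR ω (hsub hh).1
    have h5 : 0 ≤ B s ω := by simpa [hP] using (hsub hh).2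
    refine ⟨?_, h3.trans (by gcongr)⟩
    rw [abs_le] at h4 ⊢
    have := le_max_left (R - r / 2) r
    have := le_max_right (R - r / 2) r
    constructor <;> linarith [h4.2]

/-- Iterating the step. -/
theorem stk_iter {Ω : Type*} [m0 : MeasurableSpace Ω] (μ : Measure Ω)
    [IsProbabilityMeasure μ]
    (T : ℝ) (ℱ : Filtration ℝ m0) (B : ℝ → Ω → ℝ) (hB_adapted : Adapted ℱ B)
    (hB_cont : ∀ ω, Continuous fun t => B t ω)
    (hB_indep : ∀ s t : ℝ, 0 ≤ s → s ≤ t → t ≤ T →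
      Indep (MeasurableSpace.comap (fun ω => B t ω - B s ω) (inferInstance : MeasurableSpace ℝ))
        (ℱ s) μ)
    (hB_gauss : ∀ s t : ℝ, 0 ≤ s → s ≤ t → t ≤ T →
      μ.map (fun ω => B t ω - B s ω) = gaussianReal 0 (Real.toNNReal (t - s)))
    (C : ℝ) (hC : 1 ≤ C)
    (hc1 : 1 < gaussianReal 0 1 (Icc (-1) (-(1 / 2))) * ENNReal.ofReal C)
    (hc2 : 1 < gaussianReal 0 1 (Icc (1 / 2) 1) * ENNReal.ofReal C)
    (t r : ℝ) (ht : 0 ≤ t) (hr : 0 < r) (A : Set Ω)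
    (hA : MeasurableSet[ℱ t] A) (hA0 : μ A ≠ 0) (M : ℝ) (hrM : r ≤ M)
    (hM : ∀ ω ∈ A, |B t ω| ≤ M) (k : ℕ) :
    t + k * r ^ 2 ≤ T → ∃ R, r ≤ R ∧ ∃ A' ⊆ A, MeasurableSet[ℱ (t + k * r ^ 2)] A' ∧ μ A' ≠ 0 ∧
      ∀ ω ∈ A', |B (t + k * r ^ 2) ω| ≤ R ∧
        ∫ u in t..(t + k * r ^ 2), |B u ω| ≤ r * (M ^ 2 - R ^ 2) + k * (C + 3) * r ^ 3 := by
  have hr2 : 0 < r ^ 2 := by positivity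
  have hr3 : 0 < r ^ 3 := by positivity
  induction k with
  | zero =>
    intro _
    refine ⟨M, hrM, A, subset_rfl, ?_, hA0, fun ω hω => ?_⟩
    · have e : t + ((0 : ℕ) : ℝ) * r ^ 2 = t := by simp
      rw [e]
      exact hA
    · simpa using hM ω hω
  | succ k ih =>
    intro hk
    have e : t + ((k + 1 : ℕ) : ℝ) * r ^ 2 = (t + k * r ^ 2) + r ^ 2 := by push_cast; ring
    rw [e] at hk ⊢
    obtain ⟨R, hrR, A1, hA1, hA1m, hA10, h1⟩ := ih (by linarith)
    obtain ⟨A2, hA2, hA2m, hA20, h2⟩ := stk_step μ T ℱ B hB_adapted hB_cont hB_indep hB_gauss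
      C hC hc1 hc2 (t + k * r ^ 2) r (by positivity) hr hk A1 hA1m hA10 R (fun ω hω => (h1 ω hω).1)
    refine ⟨max (R - r / 2) r, le_max_right _ _, A2, hA2.trans hA1, hA2m, hA20, fun ω hω => ?_⟩
    refine ⟨(h2 ω hω).1, ?_⟩
    have hc0 := hB_cont ω
    have hci : Continuous fun u => |B u ω| := by fun_prop
    rw [← intervalIntegral.integral_add_adjacent_intervals (b := t + k * r ^ 2)
      (hci.intervalIntegrable _ _) (hci.intervalIntegrable _ _)]
    have i1 := (h1 ω (hA2 hω)).2
    have i2 := (h2 ω hω).2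
    have key : r ^ 2 * R ≤ r * (R ^ 2 - (max (R - r / 2) r) ^ 2) + 3 * r ^ 3 := by
      rcases le_total (R - r / 2) r with h | h
      · rw [max_eq_right h]
        have : r ^ 2 * R ≤ r ^ 2 * (3 / 2 * r) := by gcongr; linarith
        have : 0 ≤ r * (R ^ 2 - r ^ 2) := mul_nonneg hr.le (by nlinarith)
        nlinarith
      · rw [max_eq_left h]
        nlinarith
    push_cast
    nlinarith

theorem stk_const : ∃ C : ℝ, 1 ≤ C ∧
    1 < gaussianReal 0 1 (Icc (-1) (-(1 / 2))) * ENNReal.ofReal C ∧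
    1 < gaussianReal 0 1 (Icc (1 / 2) 1) * ENNReal.ofReal C := by
  have aux : ∀ p : ENNReal, 0 < p → ∀ᶠ C : ℝ in atTop, 1 < p * ENNReal.ofReal C := by
    intro p hp
    have h1 : Tendsto (fun C : ℝ => p * ENNReal.ofReal C) atTop (nhds (p * ⊤)) :=
      ENNReal.Tendsto.const_mul ENNReal.tendsto_ofReal_atTop (Or.inl ENNReal.top_ne_zero)
    rw [ENNReal.mul_top hp.ne'] at h1
    exact h1.eventually (lt_mem_nhds (by simp))
  have := (eventually_ge_atTop (1 : ℝ)).and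
    ((aux _ (stk_gauss_pos (-1) (-(1 / 2)) (by norm_num))).and
      (aux _ (stk_gauss_pos (1 / 2) 1 (by norm_num))))
  exact this.exists

theorem stk_sup {Ω : Type*} (s₀ : ℝ) (B : ℝ → Ω → ℝ)
    (hB_cont : ∀ ω, Continuous fun t => B t ω) (t T : ℝ) (htT : t ≤ T) (ω : Ω) :
    (⨆ u : Set.Icc t T, |Sproc s₀ B (u : ℝ) ω - Sproc s₀ B t ω|) = ∫ u in t..T, |B u ω| := by
  have hc0 := hB_cont ω
  have hci : Continuous fun u => |B u ω| := by fun_prop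
  have e : ∀ u : Set.Icc t T, |Sproc s₀ B (u : ℝ) ω - Sproc s₀ B t ω| = ∫ x in t..u, |B x ω| := by
    intro u
    unfold Sproc
    rw [add_sub_add_left_eq_sub, intervalIntegral.integral_interval_sub_left
      (hci.intervalIntegrable _ _) (hci.intervalIntegrable _ _), abs_of_nonneg]
    exact intervalIntegral.integral_nonneg u.2.1 fun _ _ => abs_nonneg _
  simp_rw [e]
  have hle : ∀ u : Set.Icc t T, ∫ x in t..u, |B x ω| ≤ ∫ x in t..T, |B x ω| := fun u =>
    intervalIntegral.integral_mono_interval le_rfl u.2.1 u.2.2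
      (ae_of_all _ fun _ => abs_nonneg _) (hci.intervalIntegrable _ _)
  haveI : Nonempty (Set.Icc t T) := ⟨⟨T, htT, le_rfl⟩⟩
  apply le_antisymm (ciSup_le hle)
  exact le_ciSup (f := fun u : Set.Icc t T => ∫ x in t..u, |B x ω|)
    ⟨_, by rintro _ ⟨u, rfl⟩; exact hle u⟩ ⟨T, htT, le_rfl⟩

/-- Positivity of the small-integral event on every nonnull past event. -/
theorem stk_pos {Ω : Type*} [m0 : MeasurableSpace Ω] (μ : Measure Ω)
    [IsProbabilityMeasure μ]
    (T : ℝ) (ℱ : Filtration ℝ m0) (B : ℝ → Ω → ℝ) (hB_adapted : Adapted ℱ B)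
    (hB_cont : ∀ ω, Continuous fun t => B t ω)
    (hB_indep : ∀ s t : ℝ, 0 ≤ s → s ≤ t → t ≤ T →
      Indep (MeasurableSpace.comap (fun ω => B t ω - B s ω) (inferInstance : MeasurableSpace ℝ))
        (ℱ s) μ)
    (hB_gauss : ∀ s t : ℝ, 0 ≤ s → s ≤ t → t ≤ T →
      μ.map (fun ω => B t ω - B s ω) = gaussianReal 0 (Real.toNNReal (t - s)))
    (t : ℝ) (ht : 0 ≤ t) (htT : t < T) (δ : ℝ) (hδ : 0 < δ) (A : Set Ω)
    (hA : MeasurableSet[ℱ t] A) (hA0 : μ A ≠ 0) :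
    μ (A ∩ {ω | ∫ u in t..T, |B u ω| < δ}) ≠ 0 := by
  obtain ⟨C, hC, hc1, hc2⟩ := stk_const
  have hL : 0 < T - t := by linarith
  -- restrict to a bounded starting point
  obtain ⟨N, hN⟩ : ∃ N : ℕ, μ (A ∩ {ω | |B t ω| ≤ N}) ≠ 0 := by
    by_contra! hcon
    apply hA0
    have hU : A = ⋃ N : ℕ, A ∩ {ω | |B t ω| ≤ N} := by
      ext ω
      simp only [mem_iUnion, mem_inter_iff, mem_setOf_eq]
      exact ⟨fun h => (exists_nat_ge |B t ω|).imp fun N hN => ⟨h, hN⟩, fun ⟨_, h, _⟩ => h⟩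
    rw [hU]
    exact measure_iUnion_null hcon
  have hA1 : MeasurableSet[ℱ t] (A ∩ {ω | |B t ω| ≤ N}) :=
    hA.inter ((hB_adapted t) (measurableSet_le continuous_abs.measurable measurable_const))
  set M : ℝ := N + 1 with hM
  have hlim : Tendsto (fun n : ℕ => √((T - t) / n)) atTop (nhds 0) := by
    have := (tendsto_const_div_atTop_nhds_zero_nat (T - t)).sqrt
    simpa using this
  have hlim2 : Tendsto (fun n : ℕ => √((T - t) / n) * (M ^ 2 + (T - t) * (C + 3))) atTop
      (nhds 0) := by
    simpa using hlim.mul_const (M ^ 2 + (T - t) * (C + 3))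
  obtain ⟨n, hn1, hn2, hn3⟩ := ((hlim.eventually (gt_mem_nhds (zero_lt_one))).and
    ((hlim2.eventually (gt_mem_nhds hδ)).and (eventually_gt_atTop 0))).exists
  set r := √((T - t) / n) with hr
  have hn0 : (0 : ℝ) < n := by exact_mod_cast hn3
  have hr0 : 0 < r := Real.sqrt_pos.2 (by positivity)
  have hr2 : r ^ 2 = (T - t) / n := Real.sq_sqrt (by positivity)
  have hnr : n * r ^ 2 = T - t := by rw [hr2]; field_simp
  have hN0 : (0 : ℝ) ≤ N := Nat.cast_nonneg N
  obtain ⟨R, hrR, A', hsub, hm, h0, hω⟩ := stk_iter μ T ℱ B hB_adapted hB_cont hB_indep hB_gauss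
    C hC hc1 hc2 t r ht hr0 _ hA1 hN M (by linarith)
    (fun ω h => le_trans (show |B t ω| ≤ N from h.2) (by linarith)) n (by linarith)
  have hT : t + n * r ^ 2 = T := by linarith
  rw [hT] at hω
  intro hz
  refine h0 (measure_mono_null (t := A ∩ {ω | ∫ u in t..T, |B u ω| < δ}) ?_ hz)
  intro ω h
  refine ⟨(hsub h).1, ?_⟩
  have h1 := (hω ω h).2
  show _ < δ
  refine lt_of_le_of_lt h1 (lt_of_le_of_lt ?_ hn2)
  have e : (n : ℝ) * (C + 3) * r ^ 3 = r * ((T - t) * (C + 3)) := by rw [← hnr]; ring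
  rw [e]
  nlinarith [mul_nonneg hr0.le (sq_nonneg R)]

/-- **Example (strictly increasing process).** Let `B` be a standard one-dimensional Brownian
motion with respect to the filtration `(F_t)_{t ∈ [0,T]}` (adapted and continuous, starting at
`0`, with increments `B_t − B_s` independent of `F_s` and Gaussian with mean `0` and variance
`t − s`), and let `s₀ > 0`. Then the process `S_t := s₀ + ∫_0^t |B_s| ds`, `t ∈ [0,T]`, is
sticky: for every `t ∈ [0,T)` and every `δ > 0`,
`P[ sup_{u ∈ [t,T]} |S_u − S_t| < δ | F_t ] > 0` almost surely. -/
theorem brownian_integral_is_sticky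
    {Ω : Type*} [m0 : MeasurableSpace Ω] (μ : Measure Ω) [IsProbabilityMeasure μ]
    (T : ℝ) (hT : 0 < T) (ℱ : Filtration ℝ m0)
    -- usual conditions: right-continuity and completeness, and `F_T = F`
    (hF_right : ∀ t : ℝ, (ℱ t : MeasurableSpace Ω) = ⨅ u ∈ Set.Ioi t, ℱ u)
    (hF_complete : ∀ s : Set Ω, μ s = 0 → MeasurableSet[ℱ 0] s)
    (hF_T : (ℱ T : MeasurableSpace Ω) = m0)
    (B : ℝ → Ω → ℝ)
    (hB_adapted : Adapted ℱ B)
    (hB_cont : ∀ ω, Continuous fun t => B t ω)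
    (hB_zero : ∀ ω, B 0 ω = 0)
    (hB_indep : ∀ s t : ℝ, 0 ≤ s → s ≤ t → t ≤ T →
      Indep (MeasurableSpace.comap (fun ω => B t ω - B s ω) (inferInstance : MeasurableSpace ℝ))
        (ℱ s) μ)
    (hB_gauss : ∀ s t : ℝ, 0 ≤ s → s ≤ t → t ≤ T →
      μ.map (fun ω => B t ω - B s ω) = gaussianReal 0 (Real.toNNReal (t - s)))
    (s₀ : ℝ) (hs₀ : 0 < s₀) :
    ∀ t ∈ Set.Ico (0 : ℝ) T, ∀ δ > (0 : ℝ),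
      ∀ᵐ ω ∂μ,
        0 < (μ[Set.indicator
              {ω' | (⨆ u : Set.Icc t T, |Sproc s₀ B (u : ℝ) ω' - Sproc s₀ B t ω'|) < δ}
              (fun _ => (1 : ℝ)) | ℱ t]) ω := by

  intro t ht δ hδ
  set E : Set Ω :=
    {ω' | (⨆ u : Set.Icc t T, |Sproc s₀ B (u : ℝ) ω' - Sproc s₀ B t ω'|) < δ} with hE
  have hE' : E = {ω | ∫ u in t..T, |B u ω| < δ} := by
    ext ω
    rw [hE, mem_setOf_eq, mem_setOf_eq, stk_sup s₀ B hB_cont t T ht.2.le ω]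
  have hEm : MeasurableSet E := by
    rw [hE']
    have hj : Measurable (Function.uncurry fun u ω => B u ω) :=
      measurable_uncurry_of_continuous_of_measurable hB_cont fun u => hB_adapted.measurable
    have hj2 : StronglyMeasurable (fun p : Ω × ℝ => |B p.2 p.1|) :=
      (continuous_abs.measurable.comp (hj.comp measurable_swap)).stronglyMeasurable
    have hj3 := hj2.integral_prod_right' (ν := volume.restrict (Ioc t T))
    simp_rw [intervalIntegral.integral_of_le ht.2.le]
    exact measurableSet_lt hj3.measurable measurable_const
  have hint : Integrable (E.indicator fun _ => (1 : ℝ)) μ :=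
    (integrable_const 1).indicator hEm
  set g := μ[E.indicator (fun _ => (1 : ℝ)) | ℱ t] with hg
  have hgm : Measurable[ℱ t] g := stronglyMeasurable_condExp.measurable
  have hA : MeasurableSet[ℱ t] {ω | g ω ≤ 0} := measurableSet_le hgm measurable_const
  rw [ae_iff]
  simp only [not_lt]
  by_contra hA0
  have h1 := stk_pos μ T ℱ B hB_adapted hB_cont hB_indep hB_gauss t ht.1 ht.2 δ hδ _ hA hA0
  rw [← hE'] at h1
  have h2 : ∫ ω in {ω | g ω ≤ 0}, g ω ∂μ = ∫ ω in {ω | g ω ≤ 0}, E.indicator (fun _ => (1 : ℝ)) ω ∂μ :=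
    setIntegral_condExp (ℱ.le t) hint hA
  have h3 : ∫ ω in {ω | g ω ≤ 0}, g ω ∂μ ≤ 0 :=
    setIntegral_nonpos (ℱ.le t _ hA) fun ω hω => hω
  rw [h2, setIntegral_indicator hEm, setIntegral_const, smul_eq_mul, mul_one] at h3
  have h4 : 0 < μ.real ({ω | g ω ≤ 0} ∩ E) :=
    ENNReal.toReal_pos h1 (measure_ne_top _ _)
  linarith
end
end
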